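/- arXiv:1909.13320 — 2 statements merged into one kernel-verified Lean document; each statement's English description precedes it below -/
import Mathlib

section
/- For every ε > 0 there exists δ > 0 such that for any probability distribution p on a countable alphabet Σ with sup_{σ∈Σ} p(σ) < δ, there exists an infinite sequence s : ℕ → Σ with density p and quasi-regularity QR(s) ≤ 1 + ε. -/
open scoped ENNReal Classical

/-- `MaxGap s σ` : the supremum of distances between consecutive appearances of `σ` in `s`. -/
noncomputable def MaxGap {α : Type*} (s : ℕ → α) (σ : α) : ℝ≥0∞ :=
  sSup ((fun n : ℕ => (n : ℝ≥0∞)) ''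
    {n | 1 ≤ n ∧ ∃ k : ℕ, ∀ i : ℕ, k < i → i < k + n → s i ≠ σ})

/-- `MinGap s σ` : the infimum of distances between consecutive appearances of `σ` in `s`. -/
noncomputable def MinGap {α : Type*} (s : ℕ → α) (σ : α) : ℝ≥0∞ :=
  sInf ((fun n : ℕ => (n : ℝ≥0∞)) ''
    {n | 1 ≤ n ∧ ∃ k : ℕ, s k = σ ∧ s (k + n) = σ})

/-- Quasi-regularity of a character `σ` in the sequence `s`, with the convention `∞/∞ = 1`. -/
noncomputable def QRchar {α : Type*} (s : ℕ → α) (σ : α) : ℝ≥0∞ :=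
  if MaxGap s σ = ⊤ ∧ MinGap s σ = ⊤ then 1 else MaxGap s σ / MinGap s σ

/-- Quasi-regularity of a sequence. -/
noncomputable def QR {α : Type*} (s : ℕ → α) : ℝ≥0∞ := ⨆ σ : α, QRchar s σ

/-- `s` has density `p`. -/
def HasDensity {α : Type*} (s : ℕ → α) (p : α → ℝ) : Prop :=
  ∀ σ : α, Filter.Tendsto
    (fun n : ℕ => ({i : ℕ | i < n ∧ s i = σ}.ncard : ℝ) / (n : ℝ))
    Filter.atTop (nhds (p σ))

/-!
Sort the letters by probability into geometric levels of ratio close to `1`, for a large `K`. In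
each level, all but boundedly many letters form a heavy group of
`K ^ 2 * q + (K * (K + 1) * q + 1) = a + b` letters, with `a < b` coprime and `b / a` close to `1`.
Placed in a fast loop of `a` slots and a slow loop of `b` slots, both emitting their letters in
turn, the letters of a group recur almost regularly, and exchanging the letters that are emitted
together whenever the slow loop holds the one that is further behind gives each letter its exact
density. The words of the groups are interleaved by a fair apportionment in which a group is
disturbed only by groups of more probable letters; as the shares of these are geometrically larger,
the disturbance is small compared with the gaps of the group. The few remaining light letters are so
rare that they can be put first, along near-arithmetic progressions of multiples of `K`; the
interleaved word fills the other positions, which changes its gaps by a factor `1 + O(1 / K)`.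
-/

namespace QuasiRegularSeq

open Filter Topology

section PrefixCount

/-- The number of elements of `A` below `n`. -/
noncomputable def prefixCount (A : Set ℕ) (n : ℕ) : ℕ := Nat.count (· ∈ A) n

lemma prefixCount_zero (A : Set ℕ) : prefixCount A 0 = 0 := Nat.count_zero _

lemma prefixCount_succ (A : Set ℕ) (n : ℕ) :
    prefixCount A (n + 1) = prefixCount A n + if n ∈ A then 1 else 0 :=
  Nat.count_succ _ _

lemma prefixCount_mono (A : Set ℕ) : Monotone (prefixCount A) := Nat.count_monotone _

lemma prefixCount_lt_prefixCount {A : Set ℕ} {m n : ℕ} (hm : m ∈ A) (hmn : m < n) :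
    prefixCount A m < prefixCount A n :=
  Nat.count_strict_mono hm hmn

lemma prefixCount_add_prefixCount_compl (A : Set ℕ) (n : ℕ) :
    prefixCount A n + prefixCount Aᶜ n = n := by
  induction n with
  | zero => simp only [prefixCount_zero]
  | succ n ih =>
    by_cases h : n ∈ A <;> simp only [prefixCount_succ, Set.mem_compl_iff, h] <;> grind

lemma exists_mem_of_lt_prefixCount {A : Set ℕ} {m n j : ℕ} (hm : prefixCount A m ≤ j)
    (hn : j < prefixCount A n) : ∃ x ∈ A, m ≤ x ∧ x < n ∧ prefixCount A x = j := by
  induction n with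
  | zero => simp only [prefixCount_zero, Nat.not_lt_zero] at hn
  | succ n ih =>
    rcases lt_or_ge j (prefixCount A n) with h | h
    · obtain ⟨x, hxA, hmx, hxn, hx⟩ := ih h
      exact ⟨x, hxA, hmx, hxn.trans n.lt_succ_self, hx⟩
    · have hnA : n ∈ A := by
        by_contra hnA
        simp only [prefixCount_succ, hnA, if_false, add_zero] at hn
        omega
      have hmn : m ≤ n := by
        by_contra! hnm
        exact (hn.trans_le (prefixCount_mono A hnm)).not_ge hm
      simp only [prefixCount_succ, hnA, if_true] at hn
      exact ⟨n, hnA, hmn, n.lt_succ_self, by omega⟩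

lemma ncard_lt_and_eq {α : Type*} (s : ℕ → α) (σ : α) (n : ℕ) :
    {i | i < n ∧ s i = σ}.ncard = prefixCount (s ⁻¹' {σ}) n := by
  have h : {i | i < n ∧ s i = σ} = ((Finset.range n).filter (· ∈ s ⁻¹' {σ}) : Set ℕ) := by
    ext i
    simp
  rw [h, Set.ncard_coe_finset, prefixCount, Nat.count_eq_card_filter_range]

end PrefixCount

section Density

/-- `A` has natural density `x`. -/
def HasNatDensity (A : Set ℕ) (x : ℝ) : Prop :=
  Tendsto (fun n => (prefixCount A n : ℝ) / n) atTop (𝓝 x)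

lemma hasDensity_iff {α : Type*} {s : ℕ → α} {p : α → ℝ} :
    HasDensity s p ↔ ∀ σ, HasNatDensity (s ⁻¹' {σ}) (p σ) := by
  simp only [HasDensity, HasNatDensity, ncard_lt_and_eq]

lemma HasNatDensity.compl {A : Set ℕ} {x : ℝ} (hA : HasNatDensity A x) :
    HasNatDensity Aᶜ (1 - x) := by
  refine (hA.const_sub 1).congr' ?_
  filter_upwards [eventually_ne_atTop 0] with n hn
  have h : (prefixCount A n : ℝ) + prefixCount Aᶜ n = n :=
    mod_cast prefixCount_add_prefixCount_compl A n
  field_simp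
  linarith

lemma hasNatDensity_empty : HasNatDensity ∅ 0 := by
  have h (n : ℕ) : prefixCount ∅ n = 0 := by
    induction n with
    | zero => exact prefixCount_zero _
    | succ n ih => simp only [prefixCount_succ, ih, Set.mem_empty_iff_false, if_false]
  simp only [HasNatDensity, h, Nat.cast_zero, zero_div, tendsto_const_nhds]

lemma HasNatDensity.of_abs_sub_le {A : Set ℕ} {x : ℝ} (f : ℕ → ℝ)
    (hf : Tendsto (fun n => f n / n) atTop (𝓝 0))
    (h : ∀ n : ℕ, |prefixCount A n - x * n| ≤ f n) : HasNatDensity A x := by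
  rw [HasNatDensity, tendsto_iff_norm_sub_tendsto_zero]
  refine squeeze_zero' (Eventually.of_forall fun _ => norm_nonneg _) ?_ hf
  filter_upwards [eventually_gt_atTop 0] with n hn
  have hn' : (0 : ℝ) < n := mod_cast hn
  rw [Real.norm_eq_abs, div_sub' hn'.ne', abs_div, abs_of_pos hn', mul_comm (n : ℝ)]
  gcongr
  exact h n

lemma hasSum_prefixCount_iUnion {β : Type*} {A : β → Set ℕ}
    (hA : Pairwise (Function.onFun Disjoint A)) (n : ℕ) :
    HasSum (fun σ => (prefixCount (A σ) n : ℝ)) (prefixCount (⋃ σ, A σ) n) := by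
  induction n with
  | zero => simpa only [prefixCount_zero, Nat.cast_zero] using hasSum_zero
  | succ n ih =>
    simp only [prefixCount_succ, Nat.cast_add]
    refine ih.add ?_
    by_cases hn : n ∈ ⋃ σ, A σ
    · obtain ⟨τ, hτ⟩ := Set.mem_iUnion.1 hn
      have h (σ : β) : n ∈ A σ ↔ σ = τ :=
        ⟨fun hσ => hA.eq (Set.not_disjoint_iff.2 ⟨n, hσ, hτ⟩), fun h => h ▸ hτ⟩
      simpa only [hn, h, if_true, Nat.cast_ite, Nat.cast_one, Nat.cast_zero]
        using hasSum_ite_eq τ (1 : ℝ)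
    · have h (σ : β) : n ∉ A σ := fun hσ => hn (Set.mem_iUnion.2 ⟨σ, hσ⟩)
      simpa only [hn, h, if_false, Nat.cast_zero] using hasSum_zero

lemma HasNatDensity.iUnion {β : Type*} {A : β → Set ℕ} {p : β → ℝ}
    (hA : Pairwise (Function.onFun Disjoint A)) (hp : Summable p)
    (hAp : ∀ σ, HasNatDensity (A σ) (p σ))
    (hle : ∀ σ (n : ℕ), (prefixCount (A σ) n : ℝ) ≤ n * p σ) :
    HasNatDensity (⋃ σ, A σ) (∑' σ, p σ) := by
  have hlim := tendsto_tsum_of_dominated_convergence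
    (f := fun (n : ℕ) σ => (prefixCount (A σ) n : ℝ) / n) hp hAp <| by
      filter_upwards [eventually_gt_atTop 0] with n hn σ
      have hn' : (0 : ℝ) < n := mod_cast hn
      rw [Real.norm_of_nonneg (by positivity), div_le_iff₀' hn']
      exact hle σ n
  refine hlim.congr fun n => ?_
  exact ((hasSum_prefixCount_iUnion hA n).div_const _).tsum_eq

end Density

section Gaps

/-- Distinct elements of `A` are at distance at least `g`. -/
def GapsGE (A : Set ℕ) (g : ℝ) : Prop := ∀ m ∈ A, ∀ n ∈ A, m < n → g ≤ (n : ℝ) - m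

/-- Every interval of integers avoiding `A` has length at most `h`. -/
def FreeRunsLE (A : Set ℕ) (h : ℝ) : Prop :=
  ∀ m n : ℕ, m ≤ n → (∀ i, m ≤ i → i < n → i ∉ A) → (n : ℝ) - m ≤ h

lemma GapsGE.mul_prefixCount_sub_le_of_mem {A : Set ℕ} {g : ℝ} (hA : GapsGE A g) {m n : ℕ}
    (hmn : m ≤ n) (hn : n ∈ A) :
    g * ((prefixCount A n : ℝ) - prefixCount A m) ≤ n - m := by
  induction n using Nat.strong_induction_on with
  | _ n ih =>
    rcases (prefixCount_mono A hmn).eq_or_lt with h | h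
    · rw [h, sub_self, mul_zero, sub_nonneg]
      exact_mod_cast hmn
    · obtain ⟨y, hyA, hmy, hyn, hy⟩ :=
        exists_mem_of_lt_prefixCount (Nat.le_sub_one_of_lt h) (Nat.sub_one_lt_of_lt h)
      have hcount : (prefixCount A n : ℝ) = prefixCount A y + 1 := by
        rw [hy]; push_cast [show 1 ≤ prefixCount A n by omega]; ring
      have := ih y hyn hmy hyA
      have := hA y hyA n hn hyn
      rw [hcount]
      linarith

lemma GapsGE.prefixCount_sub_le {A : Set ℕ} {g : ℝ} (hA : GapsGE A g) (hg : 0 < g) {m n : ℕ}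
    (hmn : m ≤ n) : (prefixCount A n : ℝ) - prefixCount A m ≤ (n - m) / g + 1 := by
  have hmn' : (m : ℝ) ≤ n := mod_cast hmn
  rcases (prefixCount_mono A hmn).eq_or_lt with h | h
  · rw [h, sub_self]
    exact add_nonneg (div_nonneg (sub_nonneg.2 hmn') hg.le) zero_le_one
  · obtain ⟨y, hyA, hmy, hyn, hy⟩ :=
      exists_mem_of_lt_prefixCount (Nat.le_sub_one_of_lt h) (Nat.sub_one_lt_of_lt h)
    have hcount : (prefixCount A n : ℝ) = prefixCount A y + 1 := by
      rw [hy]; push_cast [show 1 ≤ prefixCount A n by omega]; ring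
    have hyn' : (y : ℝ) ≤ n := mod_cast hyn.le
    rw [hcount, add_sub_right_comm, add_le_add_iff_right, le_div_iff₀' hg]
    linarith [hA.mul_prefixCount_sub_le_of_mem hmy hyA]

lemma GapsGE.le_prefixCount_compl_sub {A : Set ℕ} {g : ℝ} (hA : GapsGE A g) (hg : 0 < g)
    {m n : ℕ} (hmn : m ≤ n) :
    (1 - 1 / g) * ((n : ℝ) - m) - 1 ≤ prefixCount Aᶜ n - prefixCount Aᶜ m := by
  have hn : (prefixCount A n : ℝ) + prefixCount Aᶜ n = n :=
    mod_cast prefixCount_add_prefixCount_compl A n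
  have hm : (prefixCount A m : ℝ) + prefixCount Aᶜ m = m :=
    mod_cast prefixCount_add_prefixCount_compl A m
  have h := hA.prefixCount_sub_le hg hmn
  rw [sub_mul, one_mul, one_div_mul_eq_div]
  linarith

lemma prefixCount_sub_le (A : Set ℕ) {m n : ℕ} (hmn : m ≤ n) :
    (prefixCount A n : ℝ) - prefixCount A m ≤ n - m := by
  have hn : (prefixCount A n : ℝ) + prefixCount Aᶜ n = n :=
    mod_cast prefixCount_add_prefixCount_compl A n
  have hm : (prefixCount A m : ℝ) + prefixCount Aᶜ m = m :=
    mod_cast prefixCount_add_prefixCount_compl A m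
  have h : (prefixCount Aᶜ m : ℝ) ≤ prefixCount Aᶜ n := mod_cast prefixCount_mono Aᶜ hmn
  linarith

lemma gapsGE_of_dvd {A : Set ℕ} {K : ℕ} (hA : ∀ n ∈ A, K ∣ n) : GapsGE A K := by
  intro m hm n hn hmn
  rw [← Nat.cast_sub hmn.le]
  exact_mod_cast Nat.le_of_dvd (Nat.sub_pos_of_lt hmn) (Nat.dvd_sub (hA n hn) (hA m hm))

lemma qrChar_le {α : Type*} {s : ℕ → α} {σ : α} {g h ε : ℝ} (hε : 0 ≤ ε)
    (hgaps : GapsGE (s ⁻¹' {σ}) g) (hruns : FreeRunsLE (s ⁻¹' {σ}) h)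
    (hgh : h + 1 ≤ (1 + ε) * g) : QRchar s σ ≤ ENNReal.ofReal (1 + ε) := by
  have hMax : MaxGap s σ ≤ ENNReal.ofReal (h + 1) := by
    refine sSup_le ?_
    rintro _ ⟨n, ⟨hn, k, hk⟩, rfl⟩
    have hrun := hruns (k + 1) (k + n) (by omega) fun i hi hin => hk i hi hin
    push_cast at hrun
    simpa only [ENNReal.ofReal_natCast] using
      ENNReal.ofReal_le_ofReal (show (n : ℝ) ≤ h + 1 by linarith)
  have hMin : ENNReal.ofReal g ≤ MinGap s σ := by
    refine le_sInf ?_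
    rintro _ ⟨n, ⟨hn, k, hk, hkn⟩, rfl⟩
    have hgap := hgaps k hk (k + n) hkn (by omega)
    push_cast at hgap
    simpa only [ENNReal.ofReal_natCast] using
      ENNReal.ofReal_le_ofReal (show g ≤ (n : ℝ) by linarith)
  have hMax_ne_top : MaxGap s σ ≠ ⊤ := (hMax.trans_lt ENNReal.ofReal_lt_top).ne
  rw [QRchar, if_neg fun htop => hMax_ne_top htop.1]
  refine ENNReal.div_le_of_le_mul ?_
  calc MaxGap s σ ≤ ENNReal.ofReal ((1 + ε) * g) := hMax.trans (ENNReal.ofReal_le_ofReal hgh)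
    _ = ENNReal.ofReal (1 + ε) * ENNReal.ofReal g := ENNReal.ofReal_mul (by linarith)
    _ ≤ ENNReal.ofReal (1 + ε) * MinGap s σ := by gcongr

lemma qrChar_eq_one {α : Type*} {s : ℕ → α} {σ : α} (h : ∀ n, s n ≠ σ) : QRchar s σ = 1 := by
  have hMax : MaxGap s σ = ⊤ := by
    refine sSup_eq_top.2 fun b hb => ?_
    obtain ⟨n, hn⟩ := ENNReal.exists_nat_gt hb.ne
    exact ⟨(n + 1 : ℕ), ⟨n + 1, ⟨by omega, 0, fun i _ _ => h i⟩, rfl⟩,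
      hn.trans (mod_cast n.lt_succ_self)⟩
  have hMin : MinGap s σ = ⊤ := by
    simp only [MinGap, h, and_self, exists_false, and_false, Set.ofPred_false, Set.image_empty,
      sInf_empty]
  simp only [QRchar, hMax, hMin, and_self, if_true]

end Gaps

section Thin

/-- The elements of `A` whose index in the increasing enumeration of `A` (from `0`) is in `B`. -/
def thin (A B : Set ℕ) : Set ℕ := {n | n ∈ A ∧ prefixCount A n ∈ B}

variable {A B : Set ℕ}

lemma prefixCount_thin (A B : Set ℕ) (n : ℕ) :
    prefixCount (thin A B) n = prefixCount B (prefixCount A n) := by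
  induction n with
  | zero => simp only [prefixCount_zero]
  | succ n ih =>
    have hmem : n ∈ thin A B ↔ n ∈ A ∧ prefixCount A n ∈ B := Iff.rfl
    by_cases h : n ∈ A <;>
      simp only [prefixCount_succ, ih, hmem, h, true_and, false_and, if_true, if_false, add_zero]

lemma HasNatDensity.thin {x y : ℝ} (hA : HasNatDensity A x) (hx : 0 < x)
    (hB : HasNatDensity B y) : HasNatDensity (thin A B) (x * y) := by
  have hcount : Tendsto (prefixCount A) atTop atTop := by
    refine tendsto_natCast_atTop_iff (R := ℝ).1 ?_
    refine (hA.pos_mul_atTop hx tendsto_natCast_atTop_atTop).congr' ?_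
    filter_upwards [eventually_ne_atTop 0] with n hn
    exact div_mul_cancel₀ _ (mod_cast hn)
  refine (hA.mul (hB.comp hcount)).congr' ?_
  filter_upwards [hcount.eventually_ne_atTop 0] with n hn
  have hn' : (prefixCount A n : ℝ) ≠ 0 := mod_cast hn
  rw [prefixCount_thin, Function.comp_apply, div_mul_div_comm, mul_comm (n : ℝ),
    mul_div_mul_left _ _ hn']

lemma GapsGE.thin {g P E : ℝ} (hB : GapsGE B g) (hP : 0 < P)
    (hA : ∀ m n : ℕ, m ≤ n → (prefixCount A n : ℝ) - prefixCount A m ≤ P * (n - m) + E) :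
    GapsGE (thin A B) ((g - E) / P) := by
  intro m hm n hn hmn
  have hgap := hB _ hm.2 _ hn.2 (prefixCount_lt_prefixCount hm.1 hmn)
  rw [div_le_iff₀' hP]
  linarith [hA m n hmn.le]

lemma FreeRunsLE.thin {h P E : ℝ} (hB : FreeRunsLE B h) (hP : 0 < P)
    (hA : ∀ m n : ℕ, m ≤ n → P * (n - m) - E ≤ (prefixCount A n : ℝ) - prefixCount A m) :
    FreeRunsLE (thin A B) ((h + E) / P) := by
  intro m n hmn hfree
  have hrun := hB _ _ (prefixCount_mono A hmn) fun j hmj hjn hj => by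
    obtain ⟨x, hxA, hmx, hxn, rfl⟩ := exists_mem_of_lt_prefixCount hmj hjn
    exact hfree x hmx hxn ⟨hxA, hj⟩
  rw [le_div_iff₀' hP]
  linarith [hA m n hmn]

end Thin

section Apportionment

/-- The mass a probability distribution on `ℕ` gives to the classes `k, k + 1, …`. -/
noncomputable def tailMass (P : ℕ → ℝ) (k : ℕ) : ℝ := 1 - ∑ i ∈ Finset.range k, P i

/-- Of the first `t` slots, the number handed down to the classes `k, k + 1, …` when each class in
turn keeps its share of the slots it receives and passes on the integer part of the rest. -/
noncomputable def tailCount (P : ℕ → ℝ) : ℕ → ℕ → ℕ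
  | 0, t => t
  | k + 1, t => ⌊tailMass P (k + 1) / tailMass P k * tailCount P k t⌋₊

/-- The class that keeps slot `t`: the first one that hands down no more slots after time `t`
than before. -/
noncomputable def apportion (P : ℕ → ℝ) (t : ℕ) : ℕ :=
  sInf {k | tailCount P (k + 1) (t + 1) = tailCount P (k + 1) t}

variable {P : ℕ → ℝ}

lemma tailMass_zero (P : ℕ → ℝ) : tailMass P 0 = 1 := by
  rw [tailMass, Finset.sum_range_zero, sub_zero]

lemma tailMass_succ (P : ℕ → ℝ) (k : ℕ) : tailMass P (k + 1) = tailMass P k - P k := by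
  rw [tailMass, tailMass, Finset.sum_range_succ, sub_sub]

lemma tailMass_nonneg (hP : ∀ k, 0 ≤ P k) (hsum : HasSum P 1) (k : ℕ) : 0 ≤ tailMass P k :=
  sub_nonneg.2 (sum_le_hasSum _ (fun i _ => hP i) hsum)

lemma tendsto_tailMass (hsum : HasSum P 1) : Tendsto (tailMass P) atTop (𝓝 0) := by
  have h := hsum.tendsto_sum_nat.const_sub 1
  rwa [sub_self] at h

lemma tailMass_succ_le (hP : ∀ k, 0 ≤ P k) (k : ℕ) : tailMass P (k + 1) ≤ tailMass P k := by
  rw [tailMass_succ]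
  exact sub_le_self _ (hP k)

lemma tailMass_div_nonneg (hP : ∀ k, 0 ≤ P k) (hsum : HasSum P 1) (k : ℕ) :
    0 ≤ tailMass P (k + 1) / tailMass P k :=
  div_nonneg (tailMass_nonneg hP hsum _) (tailMass_nonneg hP hsum _)

lemma tailMass_div_le_one (hP : ∀ k, 0 ≤ P k) (hsum : HasSum P 1) (k : ℕ) :
    tailMass P (k + 1) / tailMass P k ≤ 1 :=
  div_le_one_of_le₀ (tailMass_succ_le hP k) (tailMass_nonneg hP hsum k)

lemma tailMass_div_mul (hP : ∀ k, 0 ≤ P k) (hsum : HasSum P 1) (k : ℕ) :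
    tailMass P (k + 1) / tailMass P k * tailMass P k = tailMass P (k + 1) :=
  div_mul_cancel_of_imp fun h =>
    le_antisymm ((tailMass_succ_le hP k).trans_eq h) (tailMass_nonneg hP hsum _)

lemma tailCount_succ_le_mul (hP : ∀ k, 0 ≤ P k) (hsum : HasSum P 1) (k t : ℕ) :
    (tailCount P (k + 1) t : ℝ) ≤ tailMass P (k + 1) / tailMass P k * tailCount P k t :=
  Nat.floor_le (mul_nonneg (tailMass_div_nonneg hP hsum k) (Nat.cast_nonneg _))

lemma mul_sub_one_le_tailCount_succ (P : ℕ → ℝ) (k t : ℕ) :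
    tailMass P (k + 1) / tailMass P k * tailCount P k t - 1 ≤ tailCount P (k + 1) t :=
  (Nat.sub_one_lt_floor _).le

lemma tailCount_le (hP : ∀ k, 0 ≤ P k) (hsum : HasSum P 1) (k t : ℕ) :
    (tailCount P k t : ℝ) ≤ tailMass P k * t := by
  induction k with
  | zero => rw [tailMass_zero, one_mul, tailCount]
  | succ k ih =>
    calc (tailCount P (k + 1) t : ℝ)
        ≤ tailMass P (k + 1) / tailMass P k * tailCount P k t := tailCount_succ_le_mul hP hsum k t
      _ ≤ tailMass P (k + 1) / tailMass P k * (tailMass P k * t) :=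
          mul_le_mul_of_nonneg_left ih (tailMass_div_nonneg hP hsum k)
      _ = tailMass P (k + 1) * t := by rw [← mul_assoc, tailMass_div_mul hP hsum]

lemma tailCount_succ_of_eq_zero (hP : ∀ k, 0 ≤ P k) (hsum : HasSum P 1) {k : ℕ} (hk : P k = 0)
    (t : ℕ) : tailCount P (k + 1) t = tailCount P k t := by
  rw [tailCount, tailMass_succ, hk, sub_zero]
  rcases eq_or_ne (tailMass P k) 0 with h | h
  · have hle := tailCount_le hP hsum k t
    rw [h, zero_mul] at hle
    have hzero : tailCount P k t = 0 := Nat.cast_eq_zero.1 (hle.antisymm (Nat.cast_nonneg _))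
    rw [hzero, Nat.cast_zero, mul_zero, Nat.floor_zero]
  · rw [div_self h, one_mul, Nat.floor_natCast]

lemma tailMass_mul_sub_tailCount_le (hP : ∀ k, 0 ≤ P k) (hsum : HasSum P 1) (k t : ℕ) :
    tailMass P k * t - tailCount P k t ≤ tailMass P k * ∑ i ∈ Finset.range k, (P i)⁻¹ + 1 := by
  induction k with
  | zero => simp only [tailMass_zero, tailCount, one_mul, sub_self, Finset.range_zero,
      Finset.sum_empty, zero_add, zero_le_one]
  | succ k ih =>
    rw [Finset.sum_range_succ]
    rcases (hP k).eq_or_lt with hk | hk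
    · rw [tailCount_succ_of_eq_zero hP hsum hk.symm, tailMass_succ, ← hk, sub_zero, inv_zero,
        add_zero]
      exact ih
    · have hPk : P k ≤ tailMass P k := by
        rw [← sub_nonneg, ← tailMass_succ]
        exact tailMass_nonneg hP hsum _
      have hratio : tailMass P (k + 1) / tailMass P k ≤ tailMass P (k + 1) * (P k)⁻¹ :=
        div_le_div_of_nonneg_left (tailMass_nonneg hP hsum _) hk hPk
      have hfloor := mul_sub_one_le_tailCount_succ P k t
      have hscaled := mul_le_mul_of_nonneg_left ih (tailMass_div_nonneg hP hsum k)
      rw [mul_sub, mul_add, ← mul_assoc, ← mul_assoc, tailMass_div_mul hP hsum, mul_one] at hscaled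
      rw [mul_add]
      linarith

lemma tailCount_succ_time (hP : ∀ k, 0 ≤ P k) (hsum : HasSum P 1) (k t : ℕ) :
    tailCount P k (t + 1) = tailCount P k t ∨ tailCount P k (t + 1) = tailCount P k t + 1 := by
  induction k with
  | zero => exact Or.inr rfl
  | succ k ih =>
    simp only [tailCount]
    have h0 := tailMass_div_nonneg hP hsum k
    rcases ih with h | h <;> rw [h]
    · exact Or.inl rfl
    · set y := tailMass P (k + 1) / tailMass P k
      have hlower : ⌊y * tailCount P k t⌋₊ ≤ ⌊y * (tailCount P k t + 1 : ℕ)⌋₊ := by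
        gcongr
        exact Nat.le_succ _
      have hupper : ⌊y * (tailCount P k t + 1 : ℕ)⌋₊ ≤ ⌊y * tailCount P k t⌋₊ + 1 := by
        rw [← Nat.floor_add_one (by positivity)]
        push_cast
        gcongr
        linarith [tailMass_div_le_one hP hsum k]
      omega

lemma exists_tailCount_eq_zero (hP : ∀ k, 0 ≤ P k) (hsum : HasSum P 1) (t : ℕ) :
    ∃ k, tailCount P (k + 1) t = 0 := by
  have hlim : Tendsto (fun k => tailMass P (k + 1) * t) atTop (𝓝 (0 * t)) :=
    ((tendsto_tailMass hsum).comp (tendsto_add_atTop_nat 1)).mul_const _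
  rw [zero_mul] at hlim
  obtain ⟨k, hk⟩ := (hlim.eventually_lt_const zero_lt_one).exists
  exact ⟨k, Nat.lt_one_iff.1 (mod_cast (tailCount_le hP hsum (k + 1) t).trans_lt hk)⟩

lemma tailCount_succ_time_eq (hP : ∀ k, 0 ≤ P k) (hsum : HasSum P 1) (k t : ℕ) :
    tailCount P k (t + 1) = tailCount P k t + if k ≤ apportion P t then 1 else 0 := by
  have hmem : tailCount P (apportion P t + 1) (t + 1) = tailCount P (apportion P t + 1) t := by
    refine Nat.sInf_mem (s := {k | tailCount P (k + 1) (t + 1) = tailCount P (k + 1) t}) ?_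
    obtain ⟨k, hk⟩ := exists_tailCount_eq_zero hP hsum (t + 1)
    exact ⟨k, by have := tailCount_succ_time hP hsum (k + 1) t; grind⟩
  split_ifs with hk
  · cases k with
    | zero => rfl
    | succ k =>
      have hjump : k ∉ {k | tailCount P (k + 1) (t + 1) = tailCount P (k + 1) t} :=
        Nat.notMem_of_lt_sInf (Nat.lt_of_succ_le hk)
      exact (tailCount_succ_time hP hsum (k + 1) t).resolve_left hjump
  · induction k, Nat.succ_le_of_lt (not_le.1 hk) using Nat.le_induction with
    | base => exact hmem
    | succ k hle ih =>
      rw [tailCount, tailCount, ih (by omega), add_zero, add_zero]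

lemma apportion_ne_zero (hP : ∀ k, 0 ≤ P k) (hsum : HasSum P 1) (t : ℕ) :
    P (apportion P t) ≠ 0 := fun h => by
  have hkeep := tailCount_succ_time_eq hP hsum (apportion P t) t
  have hpass := tailCount_succ_time_eq hP hsum (apportion P t + 1) t
  rw [tailCount_succ_of_eq_zero hP hsum h, tailCount_succ_of_eq_zero hP hsum h] at hpass
  simp only [le_refl, if_true, Nat.not_succ_le_self, if_false] at hkeep hpass
  omega

lemma prefixCount_apportion_add (hP : ∀ k, 0 ≤ P k) (hsum : HasSum P 1) (k n : ℕ) :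
    prefixCount (apportion P ⁻¹' {k}) n + tailCount P (k + 1) n = tailCount P k n := by
  induction n with
  | zero =>
    have hzero (j : ℕ) : tailCount P j 0 = 0 := by
      have h := tailCount_le hP hsum j 0
      rw [Nat.cast_zero, mul_zero] at h
      exact Nat.cast_eq_zero.1 (h.antisymm (Nat.cast_nonneg _))
    simp only [prefixCount_zero, hzero]
  | succ n ih =>
    simp only [prefixCount_succ, tailCount_succ_time_eq hP hsum, Set.mem_preimage,
      Set.mem_singleton_iff]
    grind

lemma abs_prefixCount_apportion_sub_le (hP : ∀ k, 0 ≤ P k) (hsum : HasSum P 1) (k n : ℕ) :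
    |(prefixCount (apportion P ⁻¹' {k}) n : ℝ) - P k * n|
      ≤ P k * ∑ i ∈ Finset.range k, (P i)⁻¹ + 1 := by
  set y := tailMass P (k + 1) / tailMass P k with hy
  have hcount : (prefixCount (apportion P ⁻¹' {k}) n : ℝ) + tailCount P (k + 1) n =
      tailCount P k n := mod_cast prefixCount_apportion_add hP hsum k n
  have hkept : (1 - y) * tailMass P k = P k := by
    rw [sub_mul, tailMass_div_mul hP hsum, tailMass_succ]
    ring
  have hy0 : 0 ≤ y := tailMass_div_nonneg hP hsum k
  have hy1 : 0 ≤ 1 - y := sub_nonneg.2 (tailMass_div_le_one hP hsum k)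
  have hS : 0 ≤ P k * ∑ i ∈ Finset.range k, (P i)⁻¹ :=
    mul_nonneg (hP k) (Finset.sum_nonneg fun i _ => inv_nonneg.2 (hP i))
  have hupper := mul_le_mul_of_nonneg_left (tailCount_le hP hsum k n) hy1
  have hlower := mul_le_mul_of_nonneg_left (tailMass_mul_sub_tailCount_le hP hsum k n) hy1
  rw [← mul_assoc, hkept] at hupper
  rw [mul_sub, mul_add, ← mul_assoc, ← mul_assoc, hkept] at hlower
  have hfloor_le := tailCount_succ_le_mul hP hsum k n
  have hfloor_ge := mul_sub_one_le_tailCount_succ P k n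
  rw [← hy] at hfloor_le hfloor_ge
  rw [abs_le]
  constructor <;> linarith

end Apportionment

section NearProgression

/-- The sequence `x` is an arithmetic progression of difference `1 / p` starting at `1 / p`, up to
delaying each term by less than `κ / p`. -/
def NearProgression (x : ℕ → ℕ) (p κ : ℝ) : Prop :=
  ∀ j : ℕ, (j : ℝ) + 1 ≤ x j * p ∧ x j * p < j + 1 + κ

lemma prefixCount_range {x : ℕ → ℕ} (hx : StrictMono x) (j : ℕ) :
    prefixCount (Set.range x) (x j) = j := by
  have h : (Finset.range (x j)).filter (· ∈ Set.range x) = (Finset.range j).image x := by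
    ext i
    simp only [Finset.mem_filter, Finset.mem_range, Set.mem_range, Finset.mem_image]
    constructor
    · rintro ⟨hi, k, rfl⟩
      exact ⟨k, hx.lt_iff_lt.1 hi, rfl⟩
    · rintro ⟨k, hk, rfl⟩
      exact ⟨hx hk, k, rfl⟩
  rw [prefixCount, Nat.count_eq_card_filter_range, h,
    Finset.card_image_of_injective _ hx.injective, Finset.card_range]

variable {x : ℕ → ℕ} {p κ : ℝ}

lemma NearProgression.strictMono (h : NearProgression x p κ) (hp : 0 < p) (hκ : κ ≤ 1) :
    StrictMono x := by
  refine strictMono_nat_of_lt_succ fun j => ?_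
  have hj := (h j).2
  have hsucc := (h (j + 1)).1
  push_cast at hsucc
  exact_mod_cast lt_of_mul_lt_mul_right (show (x j : ℝ) * p < x (j + 1) * p by linarith) hp.le

lemma NearProgression.gapsGE (h : NearProgression x p κ) (hp : 0 < p) (hκ : κ ≤ 1) :
    GapsGE (Set.range x) ((1 - κ) / p) := by
  rintro _ ⟨i, rfl⟩ _ ⟨j, rfl⟩ hij
  have hij' : (i : ℝ) + 1 ≤ j := mod_cast (h.strictMono hp hκ).lt_iff_lt.1 hij
  rw [div_le_iff₀ hp]
  linarith [(h i).2, (h j).1]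

lemma NearProgression.freeRunsLE (h : NearProgression x p κ) (hp : 0 < p) (hκ : κ ≤ 1) :
    FreeRunsLE (Set.range x) ((1 + κ) / p) := by
  intro m n _ hfree
  have hn (j : ℕ) (hj : m ≤ x j) : (n : ℝ) * p < j + 1 + κ := by
    have hnj : n ≤ x j := not_lt.1 fun hlt => hfree _ hj hlt ⟨j, rfl⟩
    have hnj' : (n : ℝ) ≤ x j := mod_cast hnj
    exact (mul_le_mul_of_nonneg_right hnj' hp.le).trans_lt (h j).2
  have hex : ∃ j, m ≤ x j := ⟨m, (h.strictMono hp hκ).le_apply⟩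
  rw [le_div_iff₀ hp, sub_mul]
  have hfind := hn _ (Nat.find_spec hex)
  rcases hj : Nat.find hex with - | j
  · rw [hj, Nat.cast_zero] at hfind
    linarith [mul_nonneg (Nat.cast_nonneg (α := ℝ) m) hp.le]
  · rw [hj] at hfind
    push_cast at hfind
    have hlt : x j < m := not_le.1 (Nat.find_min hex (hj ▸ j.lt_succ_self))
    have hlt' : (x j : ℝ) ≤ m := mod_cast hlt.le
    linarith [mul_le_mul_of_nonneg_right hlt' hp.le, (h j).1]

lemma NearProgression.prefixCount_le (h : NearProgression x p κ) (hp : 0 < p) (hκ : κ ≤ 1)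
    (n : ℕ) : (prefixCount (Set.range x) n : ℝ) ≤ n * p := by
  rcases Nat.eq_zero_or_pos (prefixCount (Set.range x) n) with h0 | hpos
  · rw [h0, Nat.cast_zero]
    positivity
  · obtain ⟨_, ⟨j, rfl⟩, -, hjn, hj⟩ :=
      exists_mem_of_lt_prefixCount (A := Set.range x) (m := 0) (n := n)
        (by rw [prefixCount_zero]; exact Nat.zero_le _) (Nat.sub_one_lt_of_lt hpos)
    rw [prefixCount_range (h.strictMono hp hκ)] at hj
    have hj' : (prefixCount (Set.range x) n : ℝ) = j + 1 := mod_cast (by omega)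
    have hjn' : (x j : ℝ) ≤ n := mod_cast hjn.le
    rw [hj']
    exact (h j).1.trans (mul_le_mul_of_nonneg_right hjn' hp.le)

lemma NearProgression.sub_two_le_prefixCount (h : NearProgression x p κ) (hp : 0 < p)
    (hκ : κ ≤ 1) (n : ℕ) : n * p - 2 ≤ (prefixCount (Set.range x) n : ℝ) := by
  set c := prefixCount (Set.range x) n with hc
  have hn : n ≤ x c := by
    by_contra! hlt
    have := prefixCount_lt_prefixCount (A := Set.range x) ⟨c, rfl⟩ hlt
    rw [prefixCount_range (h.strictMono hp hκ), ← hc] at this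
    exact lt_irrefl _ this
  have hn' : (n : ℝ) ≤ x c := mod_cast hn
  linarith [mul_le_mul_of_nonneg_right hn' hp.le, (h c).2]

lemma NearProgression.hasNatDensity (h : NearProgression x p κ) (hp : 0 < p) (hκ : κ ≤ 1) :
    HasNatDensity (Set.range x) p := by
  refine .of_abs_sub_le (fun _ => 2) (tendsto_const_div_atTop_nhds_zero_nat 2) fun n => ?_
  have hle := h.prefixCount_le hp hκ n
  have hge := h.sub_two_le_prefixCount hp hκ n
  rw [abs_le]
  constructor <;> linarith

end NearProgression

section Placement

lemma exists_injective_choice {β γ R : Type*} [LinearOrder R] (rank : β → R)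
    (t : β → Finset γ) (nbr : β → Finset β)
    (hnbr : ∀ x y, rank y ≤ rank x → ¬ Disjoint (t y) (t x) → y ∈ nbr x)
    (hcard : ∀ x, (nbr x).card < (t x).card) :
    ∃ f : β → γ, f.Injective ∧ ∀ x, f x ∈ t x := by
  refine (Finset.all_card_le_biUnion_card_iff_exists_injective t).1 fun s => ?_
  suffices h : ∃ f : β → γ, Set.InjOn f s ∧ ∀ x ∈ s, f x ∈ t x by
    obtain ⟨f, hinj, hmem⟩ := h
    exact Finset.card_le_card_of_injOn f (fun x hx => Finset.mem_biUnion.2 ⟨x, hx, hmem x hx⟩) hinj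
  induction s using Finset.induction_on_max_value rank with
  | empty =>
    have hne (x : β) : (t x).Nonempty := Finset.card_pos.1 (Nat.zero_lt_of_lt (hcard x))
    exact ⟨fun x => (hne x).choose, by simp only [Finset.coe_empty, Set.injOn_empty], by simp⟩
  | insert a s has hmax ih =>
    obtain ⟨f, hinj, hmem⟩ := ih
    obtain ⟨c, hct, hc⟩ : ∃ c ∈ t a, c ∉ (nbr a).image f :=
      Finset.exists_mem_notMem_of_card_lt_card (Finset.card_image_le.trans_lt (hcard a))
    have hcf : ∀ x ∈ s, f x ≠ c := fun x hx hfx =>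
      hc (Finset.mem_image.2 ⟨x, hnbr a x (hmax x hx)
        (Finset.not_disjoint_iff.2 ⟨c, hfx ▸ hmem x hx, hct⟩), hfx⟩)
    have hcongr : Set.EqOn f (Function.update f a c) s := fun x hx =>
      (Function.update_of_ne (ne_of_mem_of_not_mem hx has) c f).symm
    refine ⟨Function.update f a c, ?_, ?_⟩
    · rw [Finset.coe_insert, Set.injOn_insert (mod_cast has), ← hcongr.image_eq,
        Function.update_self]
      exact ⟨hinj.congr hcongr, fun ⟨x, hx, hfx⟩ => hcf x hx hfx⟩
    · refine (Finset.forall_mem_insert ..).2 ⟨?_, fun x hx => hcongr hx ▸ hmem x hx⟩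
      rwa [Function.update_self]

/-- The positions `n` at which the `j`-th term of a `NearProgression` for `q` may be put. -/
noncomputable def window (q κ : ℝ) (j : ℕ) : Finset ℕ :=
  Finset.Ico ⌈((j : ℝ) + 1) / q⌉₊ ⌈((j : ℝ) + 1 + κ) / q⌉₊

lemma mem_window {q κ : ℝ} (hq : 0 < q) {j n : ℕ} :
    n ∈ window q κ j ↔ (j : ℝ) + 1 ≤ n * q ∧ n * q < j + 1 + κ := by
  rw [window, Finset.mem_Ico, Nat.ceil_le, Nat.lt_ceil, div_le_iff₀ hq, lt_div_iff₀ hq]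

lemma div_sub_one_lt_card_window {q κ : ℝ} (hq : 0 < q) (j : ℕ) :
    κ / q - 1 < (window q κ j).card := by
  have hlower := Nat.ceil_lt_add_one (a := ((j : ℝ) + 1) / q) (by positivity)
  have hupper := Nat.le_ceil (((j : ℝ) + 1 + κ) / q)
  have hcard : ((⌈((j : ℝ) + 1 + κ) / q⌉₊ : ℕ) : ℝ) ≤
      (window q κ j).card + ⌈((j : ℝ) + 1) / q⌉₊ := by
    rw [window, Nat.card_Ico]
    exact_mod_cast le_tsub_add
  have hlength : ((j : ℝ) + 1 + κ) / q = (j + 1) / q + κ / q := add_div ..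
  linarith

/-- The indices `j` for which `window q κ j` may meet the interval `[x, x + w)`. -/
noncomputable def meetingIndices (q x w : ℝ) : Finset ℕ :=
  Finset.Ico ⌈x * q - 2⌉₊ ⌈(x + w) * q⌉₊

lemma mem_meetingIndices {q κ x w : ℝ} (hq : 0 < q) (hκ : κ ≤ 1) {j n : ℕ}
    (hn : n ∈ window q κ j) (hxn : x ≤ n) (hnw : n < x + w) : j ∈ meetingIndices q x w := by
  obtain ⟨h1, h2⟩ := (mem_window hq).1 hn
  rw [meetingIndices, Finset.mem_Ico, Nat.ceil_le, Nat.lt_ceil]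
  have := mul_le_mul_of_nonneg_right hxn hq.le
  have := mul_lt_mul_of_pos_right hnw hq
  constructor <;> linarith

lemma card_meetingIndices_le {q x w : ℝ} (hq : 0 < q) (hx : 0 ≤ x) (hw : 0 ≤ w) :
    ((meetingIndices q x w).card : ℝ) ≤ w * q + 3 := by
  have hlower := Nat.le_ceil (x * q - 2)
  have hupper := Nat.ceil_lt_add_one (a := (x + w) * q) (by positivity)
  rw [meetingIndices, Nat.card_Ico]
  rcases le_total ⌈x * q - 2⌉₊ ⌈(x + w) * q⌉₊ with h | h
  · rw [Nat.cast_sub h]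
    linarith
  · rw [Nat.sub_eq_zero_of_le h, Nat.cast_zero]
    positivity

section

variable {β : Type*} {q : β → ℝ} {κ : ℝ}

lemma finite_le_of_summable (hsum : Summable q) {c : ℝ} (hc : 0 < c) : {τ | c ≤ q τ}.Finite := by
  have h := hsum.tendsto_cofinite_zero.eventually_lt_const hc
  simpa only [eventually_cofinite, not_lt] using h

/-- The pairs `(τ, i)` with `q τ ≥ q σ` for which `window (q τ) κ i` may meet
`window (q σ) κ j`. -/
noncomputable def rivals (hq : ∀ σ, 0 < q σ) (hsum : Summable q) (κ : ℝ) (x : β × ℕ) :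
    Finset (β × ℕ) :=
  (finite_le_of_summable hsum (hq x.1)).toFinset.sigma
      (fun τ => meetingIndices (q τ) ((x.2 + 1) / q x.1) (κ / q x.1))
    |>.map (Equiv.sigmaEquivProd β ℕ).toEmbedding

lemma mem_rivals (hq : ∀ σ, 0 < q σ) (hsum : Summable q) (hκ : κ ≤ 1) {x y : β × ℕ}
    (hle : q x.1 ≤ q y.1) (hmeet : ¬ Disjoint (window (q y.1) κ y.2) (window (q x.1) κ x.2)) :
    y ∈ rivals hq hsum κ x := by
  obtain ⟨n, hny, hnx⟩ := Finset.not_disjoint_iff.1 hmeet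
  obtain ⟨hxn, hnx⟩ := (mem_window (hq _)).1 hnx
  refine Finset.mem_map.2 ⟨⟨y.1, y.2⟩, Finset.mem_sigma.2 ⟨?_, ?_⟩, rfl⟩
  · exact (Set.Finite.mem_toFinset _).2 hle
  · refine mem_meetingIndices (hq _) hκ hny ?_ ?_
    · rwa [div_le_iff₀ (hq _)]
    · rwa [← add_div, lt_div_iff₀ (hq _)]

lemma card_rivals_le (hq : ∀ σ, 0 < q σ) (hsum : Summable q) (hκ : 0 ≤ κ) (x : β × ℕ) :
    ((rivals hq hsum κ x).card : ℝ) ≤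
      κ / q x.1 * ∑' τ, q τ + 3 * {τ | q x.1 ≤ q τ}.ncard := by
  have hfin := finite_le_of_summable hsum (hq x.1)
  have hw : 0 ≤ κ / q x.1 := div_nonneg hκ (hq _).le
  have hstart : 0 ≤ ((x.2 : ℝ) + 1) / q x.1 := div_nonneg (by positivity) (hq _).le
  rw [rivals, Finset.card_map, Finset.card_sigma, Nat.cast_sum, Set.ncard_eq_toFinset_card _ hfin]
  calc ∑ τ ∈ hfin.toFinset, ((meetingIndices (q τ) ((x.2 + 1) / q x.1) (κ / q x.1)).card : ℝ)
      ≤ ∑ τ ∈ hfin.toFinset, (κ / q x.1 * q τ + 3) :=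
        Finset.sum_le_sum fun τ _ => card_meetingIndices_le (hq τ) hstart hw
    _ = κ / q x.1 * ∑ τ ∈ hfin.toFinset, q τ + 3 * hfin.toFinset.card := by
        rw [Finset.sum_add_distrib, Finset.mul_sum, Finset.sum_const, nsmul_eq_mul,
          mul_comm (3 : ℝ)]
    _ ≤ _ := by
        gcongr
        exact hsum.sum_le_tsum _ fun τ _ => (hq τ).le

lemma exists_disjoint_nearProgression (hq : ∀ σ, 0 < q σ) (hsum : Summable q)
    (hq_le : ∑' σ, q σ ≤ 1 / 4) (hκ : κ ≤ 1) (hrank : ∀ σ, 8 * {τ | q σ ≤ q τ}.ncard * q σ ≤ κ) :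
    ∃ pos : β → ℕ → ℕ, Pairwise (Function.onFun Disjoint fun σ => Set.range (pos σ)) ∧
      ∀ σ, NearProgression (pos σ) (q σ) κ := by
  have hcard (x : β × ℕ) : (rivals hq hsum κ x).card < (window (q x.1) κ x.2).card := by
    have hself : 1 ≤ ({τ | q x.1 ≤ q τ}.ncard : ℝ) := mod_cast Nat.one_le_iff_ne_zero.2
      (Set.ncard_ne_zero_of_mem (a := x.1) (le_refl (q x.1)) (finite_le_of_summable hsum (hq x.1)))
    have hwidth : 8 * {τ | q x.1 ≤ q τ}.ncard ≤ κ / q x.1 := by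
      rw [le_div_iff₀ (hq _)]
      exact hrank x.1
    have hκ0 : 0 ≤ κ := (mul_nonneg (by positivity) (hq x.1).le).trans (hrank x.1)
    have hrivals := card_rivals_le hq hsum hκ0 x
    have hmass := mul_le_mul_of_nonneg_left hq_le (div_nonneg hκ0 (hq x.1).le)
    rw [← Nat.cast_lt (α := ℝ)]
    linarith [div_sub_one_lt_card_window (κ := κ) (hq x.1) x.2]
  obtain ⟨f, hinj, hf⟩ := exists_injective_choice (fun x : β × ℕ => -q x.1)
    (fun x => window (q x.1) κ x.2) (rivals hq hsum κ)
    (fun x y hle => mem_rivals hq hsum hκ (neg_le_neg_iff.1 hle)) hcard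
  refine ⟨fun σ j => f (σ, j), fun σ τ hne => Set.disjoint_left.2 ?_,
    fun σ j => (mem_window (hq σ)).1 (hf (σ, j))⟩
  rintro _ ⟨i, rfl⟩ ⟨j, hij⟩
  exact hne (congrArg Prod.fst (hinj hij)).symm

end

end Placement

lemma add_mod_modEq {p : ℕ} (hp : 0 < p) (u c : ℕ) : u + (c + (p - 1) * u) % p ≡ c [MOD p] := by
  obtain ⟨q, rfl⟩ := Nat.exists_eq_succ_of_ne_zero hp.ne'
  rw [Nat.ModEq, Nat.add_mod_mod, Nat.succ_sub_one,
    show u + (c + q * u) = c + (q + 1) * u by ring, Nat.add_mul_mod_self_left]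

/-- A set of slots, each of which is active periodically. -/
structure Timetable (S : Type*) where
  period : S → ℕ
  phase : S → ℕ
  phase_lt : ∀ x, phase x < period x

namespace Timetable

variable {S ι : Type*} (T : Timetable S)

/-- Slot `x` is active at time `u`. -/
def Active (u : ℕ) (x : S) : Prop := u % T.period x = T.phase x

/-- The time from `u` to the next activity of slot `x`. As `-1` is `period - 1` modulo the period,
this is `phase - u` modulo the period. -/
def wait (u : ℕ) (x : S) : ℕ := (T.phase x + (T.period x - 1) * u) % T.period x

variable {T}

lemma period_pos (x : S) : 0 < T.period x := (Nat.zero_le _).trans_lt (T.phase_lt x)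

lemma wait_lt (u : ℕ) (x : S) : T.wait u x < T.period x := Nat.mod_lt _ (period_pos x)

lemma active_add_wait (u : ℕ) (x : S) : T.Active (u + T.wait u x) x :=
  Eq.trans (add_mod_modEq (period_pos x) u (T.phase x)) (Nat.mod_eq_of_lt (T.phase_lt x))

lemma Active.add_period_le {u v : ℕ} {x : S} (hu : T.Active u x) (hv : T.Active v x)
    (huv : u < v) : u + T.period x ≤ v := by
  have hmod : u ≡ v [MOD T.period x] := hu.trans hv.symm
  have := Nat.le_of_dvd (Nat.sub_pos_of_lt huv) ((Nat.modEq_iff_dvd' huv.le).1 hmod)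
  omega

lemma wait_eq_zero_iff {u : ℕ} {x : S} : T.wait u x = 0 ↔ T.Active u x := by
  refine ⟨fun h => by simpa only [h, add_zero] using active_add_wait (T := T) u x, fun h => ?_⟩
  by_contra hne
  have := h.add_period_le (active_add_wait u x) (by omega)
  have := wait_lt (T := T) u x
  omega

lemma wait_succ_add_one (u : ℕ) (x : S) :
    T.wait (u + 1) x + 1 = T.wait u x + if T.Active u x then T.period x else 0 := by
  have hnext := active_add_wait (T := T) (u + 1) x
  have hlt := wait_lt (T := T) (u + 1) x
  split_ifs with hu
  · have := hu.add_period_le hnext (by omega)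
    rw [wait_eq_zero_iff.2 hu]
    omega
  · have hne : T.wait u x ≠ 0 := mt wait_eq_zero_iff.1 hu
    have hcur := active_add_wait (T := T) u x
    have hltu := wait_lt (T := T) u x
    rcases lt_trichotomy (u + T.wait u x) (u + 1 + T.wait (u + 1) x) with h | h | h
    · have := hcur.add_period_le hnext h
      omega
    · omega
    · have := hnext.add_period_le hcur h
      omega

variable (T) in
/-- An assignment of items to slots, varying in time, in which only items in active slots move. -/
def IsRouting (e : ℕ → S ≃ ι) : Prop := ∀ u x, ¬ T.Active u x → e (u + 1) x = e u x

variable (T) in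
/-- The times at which item `i` sits in an active slot. -/
def outTimes (e : ℕ → S ≃ ι) (i : ι) : Set ℕ := {u | T.Active u ((e u).symm i)}

variable {e : ℕ → S ≃ ι}

lemma mem_outTimes_iff (he : T.IsRouting e) {i : ι} {u : ℕ} :
    u ∈ T.outTimes e i ↔ T.Active u ((e (u + 1)).symm i) := by
  constructor
  · intro h
    by_contra hn
    have hmove : e u ((e (u + 1)).symm i) = i := by rw [← he u _ hn, Equiv.apply_symm_apply]
    rw [← (Equiv.symm_apply_eq _).2 hmove.symm] at hn
    exact hn h
  · intro h
    by_contra hn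
    have hmove : e (u + 1) ((e u).symm i) = i := by rw [he u _ hn, Equiv.apply_symm_apply]
    rw [(Equiv.symm_apply_eq _).2 hmove.symm] at h
    exact hn h

lemma IsRouting.apply_eq (he : T.IsRouting e) {u v : ℕ} {x : S} (huv : u ≤ v)
    (h : ∀ t, u ≤ t → t < v → ¬ T.Active t x) : e v x = e u x := by
  induction v, huv using Nat.le_induction with
  | base => rfl
  | succ v huv ih =>
    rw [he v x (h v huv v.lt_succ_self), ih fun t hut htv => h t hut (htv.trans v.lt_succ_self)]

lemma IsRouting.add_period_le (he : T.IsRouting e) {i : ι} {u v : ℕ} (hu : u ∈ T.outTimes e i)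
    (hv : v ∈ T.outTimes e i) (huv : u < v) : u + T.period ((e (u + 1)).symm i) ≤ v := by
  set x := (e (u + 1)).symm i with hx
  have hux : T.Active u x := (mem_outTimes_iff he).1 hu
  by_contra! hlt
  have hstay : e v x = e (u + 1) x := he.apply_eq huv fun t hut htv ht => by
    have := hux.add_period_le ht hut
    omega
  have hvx : (e v).symm i = x := by rw [Equiv.symm_apply_eq, hstay, hx, Equiv.apply_symm_apply]
  have hv' : T.Active v x := hvx ▸ hv
  exact hlt.not_ge (hux.add_period_le hv' huv)

lemma IsRouting.exists_mem_outTimes (he : T.IsRouting e) (i : ι) (u : ℕ) :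
    ∃ v ∈ T.outTimes e i, u ≤ v ∧ v < u + T.period ((e u).symm i) := by
  set x := (e u).symm i with hx
  have hstay : e (u + T.wait u x) x = e u x := he.apply_eq (Nat.le_add_right _ _)
    fun t hut htv ht => by
      have := ht.add_period_le (active_add_wait u x) htv
      have := wait_lt (T := T) u x
      omega
  have hslot : (e (u + T.wait u x)).symm i = x := by
    rw [Equiv.symm_apply_eq, hstay, hx, Equiv.apply_symm_apply]
  refine ⟨u + T.wait u x, ?_, Nat.le_add_right _ _, Nat.add_lt_add_left (wait_lt u x) u⟩
  change T.Active _ _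
  rw [hslot]
  exact active_add_wait u x

variable (T) in
/-- The time to the next activity of slot `x`, as a fraction of its period. -/
noncomputable def relWait (u : ℕ) (x : S) : ℝ := T.wait u x / T.period x

lemma relWait_nonneg (u : ℕ) (x : S) : 0 ≤ T.relWait u x := by
  unfold relWait
  positivity

lemma relWait_le_one (u : ℕ) (x : S) : T.relWait u x ≤ 1 :=
  div_le_one_of_le₀ (mod_cast (wait_lt u x).le) (Nat.cast_nonneg _)

lemma relWait_succ (u : ℕ) (x : S) :
    T.relWait (u + 1) x + 1 / T.period x = T.relWait u x + if T.Active u x then 1 else 0 := by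
  have hp : (T.period x : ℝ) ≠ 0 := mod_cast (period_pos x).ne'
  have h : (T.wait (u + 1) x : ℝ) + 1 = T.wait u x + if T.Active u x then (T.period x : ℝ) else 0 :=
    mod_cast wait_succ_add_one u x
  rw [relWait, relWait, ← add_div, h, add_div]
  split_ifs
  · rw [div_self hp]
  · rw [zero_div]

lemma IsRouting.relWait_eq (he : T.IsRouting e) (i : ι) (u : ℕ) :
    T.relWait u ((e (u + 1)).symm i) = T.relWait u ((e u).symm i) := by
  by_cases hu : u ∈ T.outTimes e i
  · have h1 := wait_eq_zero_iff.2 ((mem_outTimes_iff he).1 hu)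
    have h2 := wait_eq_zero_iff.2 (show T.Active u ((e u).symm i) from hu)
    rw [relWait, relWait, h1, h2]
    simp only [Nat.cast_zero, zero_div]
  · have hmove : e (u + 1) ((e u).symm i) = i := by
      rw [he u _ hu, Equiv.apply_symm_apply]
    rw [(Equiv.symm_apply_eq _).2 hmove.symm]

lemma IsRouting.prefixCount_outTimes_add (he : T.IsRouting e) (i : ι) (n : ℕ) :
    prefixCount (T.outTimes e i) n + T.relWait 0 ((e 0).symm i) =
      ∑ u ∈ Finset.range n, 1 / (T.period ((e (u + 1)).symm i) : ℝ) +
        T.relWait n ((e n).symm i) := by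
  induction n with
  | zero => simp only [prefixCount_zero, Nat.cast_zero, Finset.range_zero, Finset.sum_empty]
  | succ n ih =>
    have h := relWait_succ (T := T) n ((e (n + 1)).symm i)
    rw [he.relWait_eq] at h
    rw [prefixCount_succ, Finset.sum_range_succ, Nat.cast_add, Nat.cast_ite, Nat.cast_one,
      Nat.cast_zero]
    simp only [mem_outTimes_iff he]
    linarith

end Timetable

section TwoLoops

/-- A fast loop of `a` slots and a slow loop of `b` slots, each activating its slots in turn. -/
def twoLoops (a b : ℕ) : Timetable (Fin a ⊕ Fin b) where
  period := Sum.elim (fun _ => a) (fun _ => b)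
  phase := Sum.elim Fin.val Fin.val
  phase_lt := by rintro (c | c) <;> exact c.isLt

lemma le_twoLoops_period {a b : ℕ} (hab : a ≤ b) (x : Fin a ⊕ Fin b) :
    a ≤ (twoLoops a b).period x := by
  rcases x with _ | _
  exacts [le_rfl, hab]

lemma twoLoops_period_le {a b : ℕ} (hab : a ≤ b) (x : Fin a ⊕ Fin b) :
    (twoLoops a b).period x ≤ b := by
  rcases x with _ | _
  exacts [hab, le_rfl]

lemma nonneg_and_two_mul_le_one {a b : ℕ} [NeZero a] {x : ℝ}
    (hx : 1 / (b : ℝ) ≤ 2 * x ∧ 2 * x ≤ 1 / a) : 0 ≤ x ∧ 2 * x ≤ 1 := by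
  have hb : 0 ≤ 1 / (b : ℝ) := by positivity
  have ha : 1 / (a : ℝ) ≤ 1 :=
    div_le_one_of_le₀ (Nat.one_le_cast.2 NeZero.one_le) (Nat.cast_nonneg a)
  constructor <;> linarith

variable {ι : Type*} {a b : ℕ} [NeZero a] [NeZero b]

lemma twoLoops_active_iff {u : ℕ} {x : Fin a ⊕ Fin b} : (twoLoops a b).Active u x ↔
    Sum.inl (Fin.ofNat a u) = x ∨ Sum.inr (Fin.ofNat b u) = x := by
  rcases x with c | c <;>
    simp only [Sum.inl.injEq, Sum.inr.injEq, reduceCtorEq, or_false, false_or, Fin.ext_iff] <;> rfl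

/-- The state of the two-loop process: the assignment of items to slots at time `u`, and the debt
`d i` owed to each item `i`. At each step the items in the two active slots are exchanged if the
slow loop holds the one with the larger debt; then the debt of each item grows by twice its target
rate and decreases by the speed of the loop it is in. -/
noncomputable def loopState (r : ι → ℝ) (e₀ : Fin a ⊕ Fin b ≃ ι) :
    ℕ → (Fin a ⊕ Fin b ≃ ι) × (ι → ℝ)
  | 0 => (e₀, 0)
  | u + 1 =>
    let (e, d) := loopState r e₀ u
    let x := Sum.inl (Fin.ofNat a u)
    let y := Sum.inr (Fin.ofNat b u)
    let e' := if d (e x) < d (e y) then (Equiv.swap x y).trans e else e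
    (e', fun i => d i + (2 * r i - 1 / (twoLoops a b).period (e'.symm i)))

/-- The slots of the items at time `u` of the two-loop process. -/
noncomputable def seat (r : ι → ℝ) (e₀ : Fin a ⊕ Fin b ≃ ι) (u : ℕ) : Fin a ⊕ Fin b ≃ ι :=
  (loopState r e₀ u).1

/-- The debts at time `u` of the two-loop process. -/
noncomputable def debt (r : ι → ℝ) (e₀ : Fin a ⊕ Fin b ≃ ι) (u : ℕ) : ι → ℝ :=
  (loopState r e₀ u).2

/-- The change of the debts at time `u` of the two-loop process. -/
noncomputable def debtStep (r : ι → ℝ) (e₀ : Fin a ⊕ Fin b ≃ ι) (u : ℕ) (i : ι) : ℝ :=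
  2 * r i - 1 / (twoLoops a b).period ((seat r e₀ (u + 1)).symm i)

variable {r : ι → ℝ} {e₀ : Fin a ⊕ Fin b ≃ ι}

lemma debt_zero : debt r e₀ 0 = 0 := rfl

lemma debt_succ (u : ℕ) (i : ι) : debt r e₀ (u + 1) i = debt r e₀ u i + debtStep r e₀ u i := rfl

lemma seat_succ (u : ℕ) : seat r e₀ (u + 1) =
    if debt r e₀ u (seat r e₀ u (Sum.inl (Fin.ofNat a u))) <
        debt r e₀ u (seat r e₀ u (Sum.inr (Fin.ofNat b u)))
      then (Equiv.swap (Sum.inl (Fin.ofNat a u)) (Sum.inr (Fin.ofNat b u))).trans (seat r e₀ u)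
      else seat r e₀ u := rfl

lemma isRouting_seat : (twoLoops a b).IsRouting (seat r e₀) := by
  intro u x hx
  rw [seat_succ]
  split_ifs
  · obtain ⟨hl, hr⟩ := not_or.1 (mt twoLoops_active_iff.2 hx)
    rw [Equiv.trans_apply, Equiv.swap_apply_of_ne_of_ne (Ne.symm hl) (Ne.symm hr)]
  · rfl

lemma debt_active_inr_le (u : ℕ) :
    debt r e₀ u (seat r e₀ (u + 1) (Sum.inr (Fin.ofNat b u))) ≤
      debt r e₀ u (seat r e₀ (u + 1) (Sum.inl (Fin.ofNat a u))) := by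
  rw [seat_succ]
  split_ifs with h
  · simpa only [Equiv.trans_apply, Equiv.swap_apply_left, Equiv.swap_apply_right] using h.le
  · exact not_lt.1 h

lemma debt_inl_le (u : ℕ) (c : Fin a) :
    debt r e₀ u (seat r e₀ u (Sum.inl c)) ≤ debt r e₀ u (seat r e₀ (u + 1) (Sum.inl c)) := by
  by_cases hc : Fin.ofNat a u = c
  · subst hc
    rw [seat_succ]
    split_ifs with h
    · simpa only [Equiv.trans_apply, Equiv.swap_apply_left] using h.le
    · exact le_rfl
  · rw [isRouting_seat u _ (by simpa [twoLoops_active_iff] using hc)]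

lemma debt_inr_le (u : ℕ) (c : Fin b) :
    debt r e₀ u (seat r e₀ (u + 1) (Sum.inr c)) ≤ debt r e₀ u (seat r e₀ u (Sum.inr c)) := by
  by_cases hc : Fin.ofNat b u = c
  · subst hc
    rw [seat_succ]
    split_ifs with h
    · simpa only [Equiv.trans_apply, Equiv.swap_apply_right] using h.le
    · exact le_rfl
  · rw [isRouting_seat u _ (by simpa [twoLoops_active_iff] using hc)]

lemma abs_debtStep_le_one (hr : ∀ i, 0 ≤ r i ∧ 2 * r i ≤ 1) (u : ℕ) (i : ι) :
    |debtStep r e₀ u i| ≤ 1 := by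
  set p := (twoLoops a b).period ((seat r e₀ (u + 1)).symm i)
  have hp : (1 : ℝ) ≤ p := mod_cast Nat.one_le_iff_ne_zero.2 (Timetable.period_pos _).ne'
  have hp0 : 0 ≤ 1 / (p : ℝ) := by positivity
  have hp1 : 1 / (p : ℝ) ≤ 1 := div_le_one_of_le₀ hp (Nat.cast_nonneg _)
  rw [debtStep, abs_le]
  constructor <;> linarith [(hr i).1, (hr i).2]

lemma abs_debt_le (hr : ∀ i, 0 ≤ r i ∧ 2 * r i ≤ 1) (u : ℕ) (i : ι) : |debt r e₀ u i| ≤ u := by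
  induction u with
  | zero => rw [debt_zero, Pi.zero_apply, abs_zero, Nat.cast_zero]
  | succ u ih =>
    rw [debt_succ, Nat.cast_succ]
    exact (abs_add_le _ _).trans (add_le_add ih (abs_debtStep_le_one hr u i))

lemma debt_inl_sub_le (hr : ∀ i, 0 ≤ r i ∧ 2 * r i ≤ 1) (u k : ℕ) (c : Fin a) :
    debt r e₀ u (seat r e₀ u (Sum.inl c)) - k ≤
      debt r e₀ (u + k) (seat r e₀ (u + k) (Sum.inl c)) := by
  induction k with
  | zero => rw [Nat.cast_zero, sub_zero, add_zero]
  | succ k ih =>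
    have hstep := abs_le.1 (abs_debtStep_le_one (e₀ := e₀) hr (u + k)
      (seat r e₀ (u + k + 1) (Sum.inl c)))
    rw [← add_assoc, debt_succ, Nat.cast_succ]
    linarith [debt_inl_le (r := r) (e₀ := e₀) (u + k) c]

lemma debt_inr_le_add (hr : ∀ i, 0 ≤ r i ∧ 2 * r i ≤ 1) (u k : ℕ) (c : Fin b) :
    debt r e₀ (u + k) (seat r e₀ (u + k) (Sum.inr c)) ≤
      debt r e₀ u (seat r e₀ u (Sum.inr c)) + k := by
  induction k with
  | zero => rw [Nat.cast_zero, add_zero, add_zero]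
  | succ k ih =>
    have hstep := abs_le.1 (abs_debtStep_le_one (e₀ := e₀) hr (u + k)
      (seat r e₀ (u + k + 1) (Sum.inr c)))
    rw [← add_assoc, debt_succ, Nat.cast_succ]
    linarith [debt_inr_le (r := r) (e₀ := e₀) (u + k) c]

lemma exists_active_pair (hab : a.Coprime b) (u : ℕ) (c : Fin a) (v : Fin b) :
    ∃ t, u ≤ t ∧ t < u + a * b ∧ Fin.ofNat a t = c ∧ Fin.ofNat b t = v := by
  obtain ⟨x, hxc, hxv⟩ := Nat.chineseRemainder hab c v
  have hpos : 0 < a * b := Nat.mul_pos (NeZero.pos a) (NeZero.pos b)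
  have hlt := Nat.mod_lt (x + (a * b - 1) * u) hpos
  have hmod := add_mod_modEq hpos u x
  refine ⟨_, Nat.le_add_right _ _, Nat.add_lt_add_left hlt u, Fin.ext ?_, Fin.ext ?_⟩
  · exact Eq.trans ((hmod.of_mul_right b).trans hxc) (Nat.mod_eq_of_lt c.isLt)
  · exact Eq.trans ((hmod.of_mul_left a).trans hxv) (Nat.mod_eq_of_lt v.isLt)

/-- The two slots were jointly active, hence sorted, less than `a * b` steps ago. -/
lemma debt_inr_le_debt_inl_add (hab : a.Coprime b) (hr : ∀ i, 0 ≤ r i ∧ 2 * r i ≤ 1) (u : ℕ)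
    (c : Fin a) (v : Fin b) : debt r e₀ u (seat r e₀ u (Sum.inr v)) ≤
      debt r e₀ u (seat r e₀ u (Sum.inl c)) + 2 * (a * b) := by
  rcases lt_or_ge u (a * b) with hu | hu
  · have hl := abs_le.1 (abs_debt_le (e₀ := e₀) hr u (seat r e₀ u (Sum.inl c)))
    have hr := abs_le.1 (abs_debt_le (e₀ := e₀) hr u (seat r e₀ u (Sum.inr v)))
    have hu' : (u : ℝ) ≤ a * b := mod_cast hu.le
    linarith
  · obtain ⟨t, hut, htu, rfl, rfl⟩ := exists_active_pair hab (u - a * b) c v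
    obtain ⟨k, rfl⟩ : ∃ k, u = t + 1 + k := Nat.exists_eq_add_of_le (by omega)
    have hk : (k : ℝ) + 1 ≤ a * b := mod_cast (by omega : k + 1 ≤ a * b)
    have hfast := debt_inl_sub_le (e₀ := e₀) hr (t + 1) k (Fin.ofNat a t)
    have hslow := debt_inr_le_add (e₀ := e₀) hr (t + 1) k (Fin.ofNat b t)
    have hsorted := debt_active_inr_le (r := r) (e₀ := e₀) t
    have hstep (x) := abs_le.1 (abs_debtStep_le_one (e₀ := e₀) hr t (seat r e₀ (t + 1) x))
    rw [debt_succ] at hfast hslow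
    linarith [(hstep (Sum.inl (Fin.ofNat a t))).1, (hstep (Sum.inr (Fin.ofNat b t))).2]

/-- Items above the fast-loop minimum `m` that gain debt sit in the slow loop, so their debt exceeds
`m` by a bounded amount only. -/
lemma exists_sub_mul_debtStep_le (hab : a.Coprime b)
    (hr : ∀ i, 1 / (b : ℝ) ≤ 2 * r i ∧ 2 * r i ≤ 1 / a) (u : ℕ) :
    ∃ m, ∀ i, (debt r e₀ u i - m) * debtStep r e₀ u i ≤ (2 * (a * b) + 2) * (2 * r i) := by
  have hr' (i) := nonneg_and_two_mul_le_one (hr i)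
  obtain ⟨c₀, hc₀⟩ :=
    Finite.exists_min fun c : Fin a => debt r e₀ u (seat r e₀ (u + 1) (Sum.inl c))
  refine ⟨debt r e₀ u (seat r e₀ (u + 1) (Sum.inl c₀)), fun i => ?_⟩
  have hQ : (0 : ℝ) ≤ (2 * (a * b) + 2) * (2 * r i) :=
    mul_nonneg (by positivity) (by linarith [(hr' i).1])
  obtain ⟨x, rfl⟩ := (seat r e₀ (u + 1)).surjective i
  have hstep (x) := abs_le.1 (abs_debtStep_le_one (e₀ := e₀) hr' u (seat r e₀ (u + 1) x))
  rcases x with c | v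
  · have hslow : debtStep r e₀ u (seat r e₀ (u + 1) (Sum.inl c)) ≤ 0 := by
      rw [debtStep, Equiv.symm_apply_apply]
      exact sub_nonpos.2 (hr _).2
    exact (mul_nonpos_of_nonneg_of_nonpos (sub_nonneg.2 (hc₀ c)) hslow).trans hQ
  · have hnonneg : 0 ≤ debtStep r e₀ u (seat r e₀ (u + 1) (Sum.inr v)) := by
      rw [debtStep, Equiv.symm_apply_apply]
      exact sub_nonneg.2 (hr _).1
    have hle : debtStep r e₀ u (seat r e₀ (u + 1) (Sum.inr v)) ≤
        2 * r (seat r e₀ (u + 1) (Sum.inr v)) := sub_le_self _ (by positivity)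
    have hsorted := debt_inr_le_debt_inl_add (e₀ := e₀) hab hr' (u + 1) c₀ v
    rw [debt_succ, debt_succ] at hsorted
    refine mul_le_mul ?_ hle hnonneg (by positivity)
    linarith [(hstep (Sum.inr v)).1, (hstep (Sum.inl c₀)).2]

section Potential

variable [Fintype ι]

lemma sum_debtStep (hs : ∑ i, r i = 1) (u : ℕ) : ∑ i, debtStep r e₀ u i = 0 := by
  have ha : (a : ℝ) ≠ 0 := mod_cast NeZero.ne a
  have hb : (b : ℝ) ≠ 0 := mod_cast NeZero.ne b
  have hspeed : ∑ i, 1 / ((twoLoops a b).period ((seat r e₀ (u + 1)).symm i) : ℝ) = 2 := by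
    rw [Equiv.sum_comp (seat r e₀ (u + 1)).symm fun x => 1 / ((twoLoops a b).period x : ℝ),
      Fintype.sum_sum_type]
    simp only [twoLoops, Sum.elim_inl, Sum.elim_inr, Finset.sum_const, Finset.card_univ,
      Fintype.card_fin, nsmul_eq_mul, mul_one_div_cancel ha, mul_one_div_cancel hb]
    norm_num
  simp only [debtStep]
  rw [Finset.sum_sub_distrib, ← Finset.mul_sum, hs, hspeed]
  norm_num

lemma sum_add_sq_le (d v f : ι → ℝ) (m : ℝ) (hv : ∑ i, v i = 0) (hv1 : ∀ i, |v i| ≤ 1)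
    (hdv : ∀ i, (d i - m) * v i ≤ f i) :
    ∑ i, (d i + v i) ^ 2 ≤ ∑ i, d i ^ 2 + 2 * ∑ i, f i + Fintype.card ι := by
  have hsq (i) : (d i + v i) ^ 2 ≤ d i ^ 2 + 2 * f i + 1 + 2 * m * v i := by
    have := (sq_le_one_iff_abs_le_one _).2 (hv1 i)
    linarith [hdv i, show (d i + v i) ^ 2 = d i ^ 2 + 2 * ((d i - m) * v i) + 2 * m * v i + v i ^ 2
      by ring]
  calc ∑ i, (d i + v i) ^ 2 ≤ ∑ i, (d i ^ 2 + 2 * f i + 1 + 2 * m * v i) :=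
        Finset.sum_le_sum fun i _ => hsq i
    _ = ∑ i, d i ^ 2 + 2 * ∑ i, f i + Fintype.card ι := by
        simp only [Finset.sum_add_distrib, ← Finset.mul_sum, hv, mul_zero, add_zero,
          Finset.sum_const, Finset.card_univ, nsmul_eq_mul, mul_one]

lemma sum_debt_sq_le (hab : a.Coprime b)
    (hr : ∀ i, 1 / (b : ℝ) ≤ 2 * r i ∧ 2 * r i ≤ 1 / a) (hs : ∑ i, r i = 1) (u : ℕ) :
    ∑ i, debt r e₀ u i ^ 2 ≤ (8 * (a * b) + 8 + Fintype.card ι) * u := by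
  induction u with
  | zero => simp [debt_zero]
  | succ u ih =>
    obtain ⟨m, hm⟩ := exists_sub_mul_debtStep_le (e₀ := e₀) hab hr u
    have hstep := abs_debtStep_le_one (e₀ := e₀) (fun i => nonneg_and_two_mul_le_one (hr i)) u
    have h := sum_add_sq_le _ _ _ m (sum_debtStep hs u) hstep hm
    simp only [← Finset.mul_sum, hs] at h
    simp only [debt_succ]
    push_cast
    linarith

end Potential

/-- The sequence of items sitting in active slots, two at each time: first the one in the fast loop,
then the one in the slow loop. -/
noncomputable def loopOutput (r : ι → ℝ) (e₀ : Fin a ⊕ Fin b ≃ ι) (n : ℕ) : ι :=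
  seat r e₀ (n / 2 + 1)
    (if n % 2 = 0 then Sum.inl (Fin.ofNat a (n / 2)) else Sum.inr (Fin.ofNat b (n / 2)))

lemma loopOutput_two_mul (u : ℕ) :
    loopOutput r e₀ (2 * u) = seat r e₀ (u + 1) (Sum.inl (Fin.ofNat a u)) := by
  rw [loopOutput, if_pos (by omega), Nat.mul_div_cancel_left u two_pos]

lemma loopOutput_two_mul_add_one (u : ℕ) :
    loopOutput r e₀ (2 * u + 1) = seat r e₀ (u + 1) (Sum.inr (Fin.ofNat b u)) := by
  rw [loopOutput, if_neg (by omega), show (2 * u + 1) / 2 = u by omega]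

lemma mem_outTimes_seat_iff {i : ι} {u : ℕ} : u ∈ (twoLoops a b).outTimes (seat r e₀) i ↔
    loopOutput r e₀ (2 * u) = i ∨ loopOutput r e₀ (2 * u + 1) = i := by
  rw [Timetable.mem_outTimes_iff isRouting_seat, twoLoops_active_iff, loopOutput_two_mul,
    loopOutput_two_mul_add_one, Equiv.eq_symm_apply, Equiv.eq_symm_apply]

lemma mem_outTimes_seat_of_loopOutput_eq {i : ι} {n : ℕ} (h : loopOutput r e₀ n = i) :
    n / 2 ∈ (twoLoops a b).outTimes (seat r e₀) i := by
  rw [mem_outTimes_seat_iff]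
  rcases Nat.even_or_odd' n with ⟨u, rfl | rfl⟩
  · exact Or.inl (by rwa [Nat.mul_div_cancel_left u two_pos])
  · exact Or.inr (by rwa [show (2 * u + 1) / 2 = u by omega])

lemma loopOutput_two_mul_ne (u : ℕ) :
    loopOutput r e₀ (2 * u) ≠ loopOutput r e₀ (2 * u + 1) := by
  rw [loopOutput_two_mul, loopOutput_two_mul_add_one, (seat r e₀ (u + 1)).injective.ne_iff]
  exact Sum.inl_ne_inr

lemma prefixCount_loopOutput_two_mul (i : ι) (u : ℕ) :
    prefixCount (loopOutput r e₀ ⁻¹' {i}) (2 * u) =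
      prefixCount ((twoLoops a b).outTimes (seat r e₀) i) u := by
  induction u with
  | zero => simp only [mul_zero, prefixCount_zero]
  | succ u ih =>
    have hne := loopOutput_two_mul_ne (r := r) (e₀ := e₀) u
    rw [mul_add_one, prefixCount_succ, prefixCount_succ, prefixCount_succ, ih, add_assoc]
    simp only [mem_outTimes_seat_iff, Set.mem_preimage, Set.mem_singleton_iff]
    split_ifs <;> simp_all

lemma gapsGE_loopOutput (hab : a ≤ b) (i : ι) :
    GapsGE (loopOutput r e₀ ⁻¹' {i}) (2 * a - 1) := by
  intro m hm n hn hmn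
  have hlt : m / 2 < n / 2 := by
    by_contra! hle
    obtain ⟨rfl, h⟩ : n = m + 1 ∧ m = 2 * (m / 2) := by omega
    rw [h] at hm hn
    exact loopOutput_two_mul_ne (m / 2) (hm.trans hn.symm)
  have hgap := isRouting_seat.add_period_le (mem_outTimes_seat_of_loopOutput_eq hm)
    (mem_outTimes_seat_of_loopOutput_eq hn) hlt
  have hperiod := le_twoLoops_period hab ((seat r e₀ (m / 2 + 1)).symm i)
  have : (m : ℝ) + 2 * a ≤ n + 1 := mod_cast (by omega : m + 2 * a ≤ n + 1)
  linarith

lemma freeRunsLE_loopOutput (hab : a ≤ b) (i : ι) :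
    FreeRunsLE (loopOutput r e₀ ⁻¹' {i}) (2 * b) := by
  intro m n _ hfree
  obtain ⟨v, hv, hmv, hvb⟩ :=
    (isRouting_seat (r := r) (e₀ := e₀)).exists_mem_outTimes i ((m + 1) / 2)
  have hperiod := twoLoops_period_le hab ((seat r e₀ ((m + 1) / 2)).symm i)
  have hnm : n ≤ m + 2 * b := by
    by_contra! hlt
    rcases mem_outTimes_seat_iff.1 hv with h | h
    · exact hfree (2 * v) (by omega) (by omega) h
    · exact hfree (2 * v + 1) (by omega) (by omega) h
  have : (n : ℝ) ≤ m + 2 * b := mod_cast hnm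
  linarith

lemma debt_eq (u : ℕ) (i : ι) : debt r e₀ u i = 2 * r i * u -
    ∑ t ∈ Finset.range u, 1 / ((twoLoops a b).period ((seat r e₀ (t + 1)).symm i) : ℝ) := by
  induction u with
  | zero => simp only [debt_zero, Pi.zero_apply, Nat.cast_zero, mul_zero, Finset.range_zero,
      Finset.sum_empty, sub_zero]
  | succ u ih =>
    rw [debt_succ, ih, debtStep, Finset.sum_range_succ, Nat.cast_succ]
    ring

lemma abs_prefixCount_loopOutput_sub_le {i : ι} (hr : 0 ≤ r i ∧ 2 * r i ≤ 1) (n : ℕ) :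
    |prefixCount (loopOutput r e₀ ⁻¹' {i}) n - r i * n| ≤ |debt r e₀ (n / 2) i| + 2 := by
  have hout := isRouting_seat.prefixCount_outTimes_add (e := seat r e₀) i (n / 2)
  have hdebt := debt_eq (r := r) (e₀ := e₀) (n / 2) i
  rw [← prefixCount_loopOutput_two_mul] at hout
  have hle : 2 * (n / 2) ≤ n := Nat.mul_div_le n 2
  have hmono : (prefixCount (loopOutput r e₀ ⁻¹' {i}) (2 * (n / 2)) : ℝ) ≤
      prefixCount (loopOutput r e₀ ⁻¹' {i}) n := mod_cast prefixCount_mono _ hle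
  have hincr := prefixCount_sub_le (loopOutput r e₀ ⁻¹' {i}) hle
  have hn : 2 * ((n / 2 : ℕ) : ℝ) ≤ n := mod_cast hle
  have hn' : (n : ℝ) ≤ 2 * (n / 2 : ℕ) + 1 := mod_cast (by omega : n ≤ 2 * (n / 2) + 1)
  have hrn := mul_le_mul_of_nonneg_left hn hr.1
  have hrn' := mul_le_mul_of_nonneg_left hn' hr.1
  have hwait (u) := Timetable.relWait_nonneg (T := twoLoops a b) u ((seat r e₀ u).symm i)
  have hwait' (u) := Timetable.relWait_le_one (T := twoLoops a b) u ((seat r e₀ u).symm i)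
  push_cast at hincr
  rw [abs_le]
  constructor <;>
    linarith [hwait 0, hwait' 0, hwait (n / 2), hwait' (n / 2), neg_abs_le (debt r e₀ (n / 2) i),
      le_abs_self (debt r e₀ (n / 2) i)]

lemma hasNatDensity_loopOutput [Fintype ι] (hab : a.Coprime b)
    (hr : ∀ i, 1 / (b : ℝ) ≤ 2 * r i ∧ 2 * r i ≤ 1 / a) (hs : ∑ i, r i = 1) (i : ι) :
    HasNatDensity (loopOutput r e₀ ⁻¹' {i}) (r i) := by
  set C : ℝ := 8 * (a * b) + 8 + Fintype.card ι
  refine .of_abs_sub_le (fun n => √C * √n + 2) ?_ fun n =>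
    (abs_prefixCount_loopOutput_sub_le (nonneg_and_two_mul_le_one (hr i)) n).trans ?_
  · have hsqrt : Tendsto (fun n : ℕ => (√n)⁻¹) atTop (𝓝 0) :=
      (Real.tendsto_sqrt_atTop.comp tendsto_natCast_atTop_atTop).inv_tendsto_atTop
    have hlim := (hsqrt.const_mul √C).add (tendsto_const_div_atTop_nhds_zero_nat 2)
    rw [mul_zero, add_zero] at hlim
    refine hlim.congr fun n => ?_
    rw [add_div, mul_div_assoc, Real.sqrt_div_self]
  · have hC : 0 ≤ C := by positivity
    rw [← Real.sqrt_mul hC]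
    gcongr
    refine Real.abs_le_sqrt ?_
    calc debt r e₀ (n / 2) i ^ 2 ≤ ∑ j, debt r e₀ (n / 2) j ^ 2 :=
          Finset.single_le_sum (f := fun j => debt r e₀ (n / 2) j ^ 2) (fun _ _ => sq_nonneg _)
            (Finset.mem_univ i)
      _ ≤ C * (n / 2 : ℕ) := sum_debt_sq_le hab hr hs _
      _ ≤ C * n := by gcongr; exact Nat.div_le_self n 2

end TwoLoops

theorem exists_hasNatDensity_gapsGE_freeRunsLE {ι : Type*} [Fintype ι] {a b : ℕ} (ha : 0 < a)
    (hle : a ≤ b) (hab : a.Coprime b) (hcard : Fintype.card ι = a + b) {r : ι → ℝ}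
    (hr : ∀ i, 1 / (b : ℝ) ≤ 2 * r i ∧ 2 * r i ≤ 1 / a) (hs : ∑ i, r i = 1) :
    ∃ w : ℕ → ι, ∀ i, HasNatDensity (w ⁻¹' {i}) (r i) ∧ GapsGE (w ⁻¹' {i}) (2 * a - 1) ∧
      FreeRunsLE (w ⁻¹' {i}) (2 * b) := by
  have : NeZero a := ⟨ha.ne'⟩
  have : NeZero b := ⟨(ha.trans_le hle).ne'⟩
  have e₀ : Fin a ⊕ Fin b ≃ ι := Fintype.equivOfCardEq
    (by rw [Fintype.card_sum, Fintype.card_fin, Fintype.card_fin, hcard])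
  exact ⟨loopOutput r e₀, fun i =>
    ⟨hasNatDensity_loopOutput hab hr hs i, gapsGE_loopOutput hle i, freeRunsLE_loopOutput hle i⟩⟩

/-- The set `A` has density `x`, and the ratio of its longest to its shortest gap is at most
`1 + ε`; a longest gap is one more than a longest free run. -/
def IsEvenlySpaced (A : Set ℕ) (x ε : ℝ) : Prop :=
  HasNatDensity A x ∧ ∃ g h, GapsGE A g ∧ FreeRunsLE A h ∧ h + 1 ≤ (1 + ε) * g

lemma hasDensity_and_qr_le {α : Type*} {s : ℕ → α} {p : α → ℝ} {ε : ℝ} (hε : 0 ≤ ε)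
    (hp : ∀ σ, 0 ≤ p σ) (hzero : ∀ n, p (s n) ≠ 0)
    (hpos : ∀ σ, 0 < p σ → IsEvenlySpaced (s ⁻¹' {σ}) (p σ) ε) :
    HasDensity s p ∧ QR s ≤ ENNReal.ofReal (1 + ε) := by
  have hne {σ} (hσ : 0 = p σ) (n : ℕ) : s n ≠ σ := by
    rintro rfl
    exact hzero n hσ.symm
  refine ⟨hasDensity_iff.2 fun σ => ?_, iSup_le fun σ => ?_⟩ <;>
    rcases (hp σ).eq_or_lt with hσ | hσ
  · rw [← hσ, Set.eq_empty_of_forall_notMem (s := s ⁻¹' {σ}) (hne hσ)]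
    exact hasNatDensity_empty
  · exact (hpos σ hσ).1
  · rw [qrChar_eq_one (hne hσ)]
    exact ENNReal.one_le_ofReal.2 (by linarith)
  · obtain ⟨-, g, h, hgaps, hruns, hgh⟩ := hpos σ hσ
    exact qrChar_le hε hgaps hruns hgh

section Interleaving

variable {α κ : Type*}

/-- The sequence consuming the sequences `w k` in the order prescribed by `c`: at time `t` it takes
the next unused term of `w (c t)`. -/
noncomputable def interleave (c : ℕ → κ) (w : κ → ℕ → α) (t : ℕ) : α :=
  w (c t) (prefixCount (c ⁻¹' {c t}) t)

lemma preimage_interleave {c : ℕ → κ} {w : κ → ℕ → α} {k : κ} {σ : α}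
    (h : ∀ t n, w (c t) n = σ → c t = k) :
    interleave c w ⁻¹' {σ} = thin (c ⁻¹' {k}) (w k ⁻¹' {σ}) := by
  ext t
  constructor
  · intro ht
    obtain rfl := h t _ ht
    exact ⟨rfl, ht⟩
  · rintro ⟨rfl, ht⟩
    exact ht

variable {L : Set α} {A : L → Set ℕ} {u : ℕ → α}

/-- The sequence with `σ` at the positions in `A σ` for each `σ ∈ L`, and with `u` spread over the
remaining positions. -/
noncomputable def overlay (A : L → Set ℕ) (u : ℕ → α) (n : ℕ) : α :=
  if h : ∃ σ, n ∈ A σ then h.choose else u (prefixCount (⋃ σ, A σ)ᶜ n)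

lemma preimage_overlay_of_mem (hA : Pairwise (Function.onFun Disjoint A)) (hu : ∀ t, u t ∉ L)
    (σ : L) : overlay A u ⁻¹' {(σ : α)} = A σ := by
  ext n
  rw [Set.mem_preimage, Set.mem_singleton_iff, overlay]
  split_ifs with h
  · rw [← Subtype.ext_iff]
    refine ⟨fun hσ => hσ ▸ h.choose_spec, fun hn => ?_⟩
    by_contra hne
    exact Set.disjoint_left.1 (hA hne) h.choose_spec hn
  · refine ⟨fun hσ => (hu _ (hσ ▸ σ.2)).elim, fun hn => (h ⟨σ, hn⟩).elim⟩

lemma preimage_overlay_of_notMem {σ : α} (hσ : σ ∉ L) :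
    overlay A u ⁻¹' {σ} = thin (⋃ σ, A σ)ᶜ (u ⁻¹' {σ}) := by
  ext n
  rw [Set.mem_preimage, Set.mem_singleton_iff, overlay, thin, Set.mem_ofPred, Set.mem_compl_iff,
    Set.mem_iUnion]
  split_ifs with h
  · exact ⟨fun hn => (hσ (hn ▸ h.choose.2)).elim, fun hn => (hn.1 h).elim⟩
  · exact ⟨fun hn => ⟨h, hn⟩, fun hn => hn.2⟩

end Interleaving

lemma NearProgression.const_mul {x : ℕ → ℕ} {p κ : ℝ} {K : ℕ} (h : NearProgression x (K * p) κ) :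
    NearProgression (fun j => K * x j) p κ := by
  intro j
  rw [Nat.cast_mul, show (K * x j : ℝ) * p = x j * (K * p) by ring]
  exact h j

lemma NearProgression.isEvenlySpaced {x : ℕ → ℕ} {p κ ε : ℝ} (h : NearProgression x p κ)
    (hp : 0 < p) (hpκ : p ≤ κ) (hκ : κ ≤ 1 / 16) (hε : 12 * κ ≤ ε) :
    IsEvenlySpaced (Set.range x) p ε := by
  have hκ1 : κ ≤ 1 := by linarith
  refine ⟨h.hasNatDensity hp hκ1, _, _, h.gapsGE hp hκ1, h.freeRunsLE hp hκ1, ?_⟩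
  rw [← mul_div_assoc, div_add_one hp.ne']
  gcongr
  nlinarith

lemma four_mul_card_div_le_div {K q : ℕ} (hK : 16 ≤ K) (hq : K ≤ q) {P : ℝ} (hP : 0 < P) :
    4 * (((2 * K ^ 2 + K) * q + 1 : ℝ)) / (K ^ 2 * P) ≤ K * q / P := by
  have hK' : (16 : ℝ) ≤ K := mod_cast hK
  have hq' : (K : ℝ) ≤ q := mod_cast hq
  have hKq : (256 : ℝ) ≤ K * q := by nlinarith
  have hKKq : (16 : ℝ) * (K * q) ≤ K * (K * q) := by gcongr
  have hKKKq : (16 : ℝ) * (K * (K * q)) ≤ K * (K * (K * q)) := by gcongr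
  rw [← div_div]
  gcongr
  rw [div_le_iff₀ (by positivity)]
  linarith

lemma div_one_sub_add_one_le_mul {X t g h ε : ℝ} (ht : 0 < t) (ht' : t ≤ 1 / 16) (htX : 1 ≤ t * X)
    (hh : h ≤ X * (1 + 3 * t)) (hg : X * (1 - 2 * t) ≤ g) (hε : 12 * t ≤ ε) :
    h / (1 - t) + 1 ≤ (1 + ε) * g := by
  have hX : 0 ≤ X := by nlinarith
  have hg0 : 0 ≤ g := (mul_nonneg hX (by linarith)).trans hg
  calc h / (1 - t) + 1 ≤ X * (1 + 5 * t) + 1 := by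
        gcongr
        rw [div_le_iff₀ (show 0 < 1 - t by linarith), mul_assoc]
        exact hh.trans (mul_le_mul_of_nonneg_left (by nlinarith) hX)
    _ ≤ X * (1 + 6 * t) := by linarith
    _ ≤ X * ((1 + 12 * t) * (1 - 2 * t)) := mul_le_mul_of_nonneg_left (by nlinarith) hX
    _ = (1 + 12 * t) * (X * (1 - 2 * t)) := by ring
    _ ≤ (1 + 12 * t) * g := by gcongr
    _ ≤ (1 + ε) * g := by gcongr

lemma two_layer_gap_bound {K q : ℕ} (hK : 16 ≤ K) (hq : K ≤ q) {P S ε : ℝ} (hP : 0 < P)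
    (hP1 : P ≤ 1) (hS : S ≤ 4 * ((2 * K ^ 2 + K) * q + 1) / (K ^ 2 * P)) (hε : 12 / K ≤ ε) :
    ((2 * (K * (K + 1) * q + 1) + 2 * (P * S + 1)) / P + 1) / (1 - 1 / K) + 1 ≤
      (1 + ε) * ((2 * (K ^ 2 * q) - 1 - 2 * (P * S + 1)) / P) := by
  have hK' : (16 : ℝ) ≤ K := mod_cast hK
  have hq' : (K : ℝ) ≤ q := mod_cast hq
  have hK0 : (0 : ℝ) < K := by linarith
  set t : ℝ := 1 / K with ht
  have ht0 : 0 < t := one_div_pos.2 hK0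
  have ht1 : t ≤ 1 / 16 := one_div_le_one_div_of_le (by norm_num) hK'
  set X : ℝ := 2 * (K ^ 2 * q) / P with hX
  have htX : t * X = 2 * (K * q) / P := by
    rw [hX, ht]
    field_simp
  have hKq : (256 : ℝ) ≤ K * q := by nlinarith
  have hsmall : 5 / P ≤ t * X := by
    rw [htX]
    gcongr
    linarith
  have hone : 1 ≤ 1 / P := one_le_one_div hP hP1
  have hSX : 2 * S ≤ t * X := by
    rw [htX, mul_div_assoc]
    linarith [four_mul_card_div_le_div hK hq hP]
  have hlong : (2 * (K * (K + 1) * q + 1) + 2 * (P * S + 1)) / P + 1 ≤ X * (1 + 3 * t) := by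
    have h : (2 * (K * (K + 1) * q + 1) + 2 * (P * S + 1)) / P =
        X + t * X + 2 * S + 4 * (1 / P) := by
      rw [htX, hX]
      field_simp
      ring
    linarith [show 5 / P = 5 * (1 / P) by ring]
  have hshort : X * (1 - 2 * t) ≤ (2 * (K ^ 2 * q) - 1 - 2 * (P * S + 1)) / P := by
    have h : (2 * (K ^ 2 * q) - 1 - 2 * (P * S + 1)) / P = X - 2 * S - 3 * (1 / P) := by
      rw [hX]
      field_simp
      ring
    linarith [show 5 / P = 5 * (1 / P) by ring]
  have hεt : 12 * t ≤ ε := by linarith [show 12 * t = 12 / K by rw [ht]; ring]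
  refine div_one_sub_add_one_le_mul ht0 ht1 ?_ hlong hshort hεt
  linarith [show 5 / P = 5 * (1 / P) by ring]

lemma hasNatDensity_of_abs_sub_le_const {A : Set ℕ} {x E : ℝ}
    (h : ∀ n : ℕ, |prefixCount A n - x * n| ≤ E) : HasNatDensity A x :=
  .of_abs_sub_le (fun _ => E) (tendsto_const_div_atTop_nhds_zero_nat E) h

lemma isEvenlySpaced_thin_thin {K q : ℕ} (hK : 16 ≤ K) (hq : K ≤ q) {A B C : Set ℕ}
    {P S x z ε : ℝ} (hB : ∀ n ∈ B, K ∣ n) (hBz : HasNatDensity Bᶜ z) (hz : 0 < z)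
    (hC : ∀ n : ℕ, |prefixCount C n - P * n| ≤ P * S + 1) (hP : 0 < P) (hP1 : P ≤ 1)
    (hS : S ≤ 4 * ((2 * K ^ 2 + K) * q + 1) / (K ^ 2 * P)) (hA : HasNatDensity A x)
    (hgaps : GapsGE A (2 * (K ^ 2 * q : ℕ) - 1))
    (hruns : FreeRunsLE A (2 * (K * (K + 1) * q + 1 : ℕ))) (hε : 12 / K ≤ ε) :
    IsEvenlySpaced (thin Bᶜ (thin C A)) (z * (P * x)) ε := by
  have hK' : (1 : ℝ) < K := mod_cast (by omega : 1 < K)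
  have hC' (m n) : |((prefixCount C n : ℝ) - prefixCount C m) - P * (n - m)| ≤ 2 * (P * S + 1) := by
    rw [show ((prefixCount C n : ℝ) - prefixCount C m) - P * (n - m) =
      (prefixCount C n - P * n) - (prefixCount C m - P * m) by ring, two_mul]
    exact (abs_sub _ _).trans (add_le_add (hC n) (hC m))
  refine ⟨hBz.thin hz ((hasNatDensity_of_abs_sub_le_const hC).thin hP hA), _, _,
    (hgaps.thin (E := 2 * (P * S + 1)) hP fun m n _ => ?_).thin (P := 1) (E := 0) one_pos
      fun m n hmn => ?_,
    (hruns.thin (E := 2 * (P * S + 1)) hP fun m n _ => ?_).thin (P := 1 - 1 / K) (E := 1)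
      (sub_pos.2 ((div_lt_one (by linarith)).2 hK'))
      fun m n hmn => (gapsGE_of_dvd hB).le_prefixCount_compl_sub (by linarith) hmn, ?_⟩
  · exact sub_le_iff_le_add'.1 (abs_le.1 (hC' m n)).2
  · rw [one_mul, add_zero]
    exact prefixCount_sub_le _ hmn
  · linarith [(abs_le.1 (hC' m n)).1]
  · have h := two_layer_gap_bound hK hq hP hP1 hS hε
    push_cast
    rwa [sub_zero, div_one]

section HeavyGroups

/-- The ratio of the geometric scale that sorts the letters into levels. -/
noncomputable def ratio (K : ℕ) : ℝ := (2 * K + 1) / (2 * K + 2)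

/-- Heavy groups have `blockSize K * q + 1 = K ^ 2 * q + (K * (K + 1) * q + 1)` letters, the two
summands being coprime. -/
def blockSize (K : ℕ) : ℕ := 2 * K ^ 2 + K

lemma ratio_pos (K : ℕ) : 0 < ratio K := by
  rw [ratio]
  positivity

lemma ratio_lt_one (K : ℕ) : ratio K < 1 := by
  rw [ratio, div_lt_one (by positivity)]
  linarith

lemma mul_ratio (K : ℕ) : (2 * K + 2) * ratio K = 2 * K + 1 :=
  mul_div_cancel₀ _ (by positivity)

lemma blockSize_mul_add_one_le {K : ℕ} (hK : 0 < K) (q : ℕ) :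
    ((blockSize K * q + 1 : ℕ) : ℝ) ≤ 2 * ratio K * (K * (K + 1) * q + 1 : ℕ) := by
  have hK' : (1 : ℝ) ≤ K := mod_cast hK
  have hratio := mul_ratio K
  calc ((blockSize K * q + 1 : ℕ) : ℝ) = (2 * K + 1) * (K * q) + 1 := by
        push_cast [blockSize]
        ring
    _ ≤ (2 * K + 2) * ratio K * (K * q) + 2 * ratio K := by
        rw [hratio]
        gcongr
        nlinarith [ratio_lt_one K]
    _ = _ := by
        push_cast
        ring

lemma two_mul_le_blockSize_mul_ratio (K q : ℕ) :
    2 * ((K ^ 2 * q : ℕ) : ℝ) ≤ (blockSize K * q + 1 : ℕ) * ratio K := by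
  refine le_of_mul_le_mul_left ?_ (show (0 : ℝ) < 2 * K + 2 by positivity)
  rw [mul_left_comm _ _ (ratio K), mul_ratio]
  push_cast [blockSize]
  have hq : (0 : ℝ) ≤ K * q := by positivity
  nlinarith

variable {α : Type*} {F : Finset α} {K q : ℕ} {p : α → ℝ} {c : ℝ}

lemma sum_pos_and_two_mul_div_sum_bounds (hK : 0 < K) (hq : 0 < q)
    (hF : F.card = blockSize K * q + 1) (hc : 0 < c)
    (hp : ∀ σ ∈ F, c * ratio K ≤ p σ ∧ p σ ≤ c) :
    0 < ∑ τ ∈ F, p τ ∧ ∀ σ ∈ F,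
      1 / ((K * (K + 1) * q + 1 : ℕ) : ℝ) ≤ 2 * (p σ / ∑ τ ∈ F, p τ) ∧
        2 * (p σ / ∑ τ ∈ F, p τ) ≤ 1 / (K ^ 2 * q : ℕ) := by
  set P := ∑ τ ∈ F, p τ
  have hP_le : P ≤ (blockSize K * q + 1 : ℕ) * c := by
    rw [← hF, ← nsmul_eq_mul]
    exact Finset.sum_le_card_nsmul _ _ _ fun σ hσ => (hp σ hσ).2
  have hle_P : (blockSize K * q + 1 : ℕ) * (c * ratio K) ≤ P := by
    rw [← hF, ← nsmul_eq_mul]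
    exact Finset.card_nsmul_le_sum _ _ _ fun σ hσ => (hp σ hσ).1
  have hP : 0 < P := lt_of_lt_of_le (mul_pos (by positivity) (mul_pos hc (ratio_pos K))) hle_P
  refine ⟨hP, fun σ hσ => ?_⟩
  obtain ⟨hlow, hhigh⟩ := hp σ hσ
  have ha : (0 : ℝ) < (K ^ 2 * q : ℕ) := by positivity
  rw [← mul_div_assoc, div_le_div_iff₀ (by positivity) hP, div_le_div_iff₀ hP ha, one_mul]
  constructor
  · calc P ≤ (blockSize K * q + 1 : ℕ) * c := hP_le
      _ ≤ 2 * ratio K * (K * (K + 1) * q + 1 : ℕ) * c := by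
        gcongr
        exact blockSize_mul_add_one_le hK q
      _ = 2 * (c * ratio K) * (K * (K + 1) * q + 1 : ℕ) := by ring
      _ ≤ 2 * p σ * (K * (K + 1) * q + 1 : ℕ) := by gcongr
  · calc 2 * p σ * (K ^ 2 * q : ℕ) ≤ 2 * c * (K ^ 2 * q : ℕ) := by gcongr
      _ = 2 * (K ^ 2 * q : ℕ) * c := by ring
      _ ≤ (blockSize K * q + 1 : ℕ) * ratio K * c :=
        mul_le_mul_of_nonneg_right (two_mul_le_blockSize_mul_ratio K q) hc.le
      _ = (blockSize K * q + 1 : ℕ) * (c * ratio K) := by ring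
      _ ≤ P := hle_P

lemma preimage_coe_singleton {ι β : Type*} {P : β → Prop} (w : ι → Subtype P) (x : Subtype P) :
    (fun n => (w n : β)) ⁻¹' {(x : β)} = w ⁻¹' {x} := by
  ext n
  exact Subtype.ext_iff.symm

lemma exists_heavy_sequence (hK : 0 < K) (hq : 0 < q) (hF : F.card = blockSize K * q + 1)
    (hc : 0 < c) (hp : ∀ σ ∈ F, c * ratio K ≤ p σ ∧ p σ ≤ c) :
    ∃ w : ℕ → α, (∀ n, w n ∈ F) ∧ ∀ σ ∈ F, HasNatDensity (w ⁻¹' {σ}) (p σ / ∑ τ ∈ F, p τ) ∧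
      GapsGE (w ⁻¹' {σ}) (2 * (K ^ 2 * q : ℕ) - 1) ∧
      FreeRunsLE (w ⁻¹' {σ}) (2 * (K * (K + 1) * q + 1 : ℕ)) := by
  obtain ⟨hP, hbounds⟩ := sum_pos_and_two_mul_div_sum_bounds hK hq hF hc hp
  have hcop : (K ^ 2 * q).Coprime (K * (K + 1) * q + 1) := by
    rw [← Nat.isCoprime_iff_coprime]
    push_cast
    exact .mul_left (.pow_left ⟨-((K + 1) * q), 1, by ring⟩) ⟨-(K * (K + 1)), 1, by ring⟩
  have hcard : Fintype.card F = K ^ 2 * q + (K * (K + 1) * q + 1) := by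
    rw [Fintype.card_coe, hF, blockSize]
    ring
  have hsum : ∑ σ : F, p σ / ∑ τ ∈ F, p τ = 1 := by
    rw [← Finset.sum_div, Finset.sum_coe_sort F p, div_self hP.ne']
  obtain ⟨w, hw⟩ := exists_hasNatDensity_gapsGE_freeRunsLE (by positivity)
    (by nlinarith) hcop hcard (fun σ => hbounds σ σ.2) hsum
  refine ⟨fun n => w n, fun n => (w n).2, fun σ hσ => ?_⟩
  rw [preimage_coe_singleton w ⟨σ, hσ⟩]
  exact hw ⟨σ, hσ⟩

end HeavyGroups

section Levels

lemma exists_subset_card_eq_mul_add_one {α : Type*} (C : Finset α) {c K : ℕ} (hc : 0 < c)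
    (hK : 0 < K) : ∃ F ⊆ C, ∃ q : ℕ, (F.Nonempty → K ≤ q ∧ F.card = c * q + 1) ∧
      (C \ F).card ≤ c * K + 1 := by
  rcases lt_or_ge C.card (c * K + 1) with h | h
  · exact ⟨∅, C.empty_subset, 0, fun hne => absurd hne Finset.not_nonempty_empty,
      by simpa only [Finset.sdiff_empty] using h.le⟩
  · have hdiv : c * ((C.card - 1) / c) ≤ C.card - 1 := Nat.mul_div_le _ _
    obtain ⟨F, hFC, hF⟩ := Finset.exists_subset_card_eq (s := C)
      (n := c * ((C.card - 1) / c) + 1) (by omega)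
    refine ⟨F, hFC, (C.card - 1) / c, fun _ => ⟨?_, hF⟩, ?_⟩
    · rw [Nat.le_div_iff_mul_le hc, mul_comm]
      omega
    · have hlt := Nat.lt_mul_div_succ (C.card - 1) hc
      have hcK := Nat.le_mul_of_pos_right c hK
      rw [Nat.mul_add] at hlt
      rw [Finset.card_sdiff_of_subset hFC, hF]
      omega

/-- The number of letters of a level that may be left over when its heavy group is formed. -/
def lightBound (K : ℕ) : ℕ := blockSize K * K + 1

/-- A sorting of the letters into levels, level `k` consisting of the letters with probability in
`(ratio K ^ (k + 1), ratio K ^ k]`. The letters `heavy k` of level `k` form one group of an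
admissible size, determined by `quot k` (a junk value if the group is empty); at most `lightBound K`
letters of level `k` are left over. -/
structure LevelSplitting {α : Type*} (K : ℕ) (p : α → ℝ) where
  level : α → ℕ
  heavy : ℕ → Finset α
  quot : ℕ → ℕ
  ratio_pow_lt : ∀ σ, ratio K ^ (level σ + 1) < p σ
  le_ratio_pow : ∀ σ, p σ ≤ ratio K ^ level σ
  level_of_mem_heavy : ∀ {k σ}, σ ∈ heavy k → level σ = k
  le_quot : ∀ {k}, (heavy k).Nonempty → K ≤ quot k
  card_heavy : ∀ {k}, (heavy k).Nonempty → (heavy k).card = blockSize K * quot k + 1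
  card_le_lightBound : ∀ k (u : Finset α), (∀ σ ∈ u, level σ = k ∧ σ ∉ heavy k) →
    u.card ≤ lightBound K

lemma nonempty_levelSplitting {α : Type*} {K : ℕ} (hK : 0 < K) {p : α → ℝ} (hp : ∀ σ, 0 < p σ)
    (hp1 : ∀ σ, p σ ≤ 1) (hsum : Summable p) : Nonempty (LevelSplitting K p) := by
  choose level hlevel using fun σ =>
    exists_nat_pow_near_of_lt_one (hp σ) (hp1 σ) (ratio_pos K) (ratio_lt_one K)
  have hfin (k : ℕ) : {σ | level σ = k}.Finite := by
    refine (finite_le_of_summable hsum (pow_pos (ratio_pos K) (k + 1))).subset ?_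
    rintro σ rfl
    exact (hlevel σ).1.le
  have hc : 0 < blockSize K := by rw [blockSize]; positivity
  choose heavy hsub quot hheavy hlight using fun k =>
    exists_subset_card_eq_mul_add_one (hfin k).toFinset hc hK
  refine ⟨level, heavy, quot, fun σ => (hlevel σ).1, fun σ => (hlevel σ).2,
    fun {k _} hσ => (hfin k).mem_toFinset.1 (hsub k hσ), fun {k} hne => (hheavy k hne).1,
    fun {k} hne => (hheavy k hne).2, fun k u hu => ?_⟩
  refine (Finset.card_le_card fun σ hσ => ?_).trans (hlight k)
  exact Finset.mem_sdiff.2 ⟨(hfin k).mem_toFinset.2 (hu σ hσ).1, (hu σ hσ).2⟩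

/-- The levels from `k₀` on are so rare that their light letters can be placed with little
interference. -/
def HasSmallTail (K k₀ : ℕ) : Prop :=
  ∀ u : Finset ℕ, (∀ k ∈ u, k₀ ≤ k) →
    lightBound K * ∑ k ∈ u, (k + 1) * ratio K ^ k ≤ 1 / (8 * K ^ 2 : ℝ)

lemma exists_hasSmallTail {K : ℕ} (hK : 0 < K) : ∃ k₀, HasSmallTail K k₀ := by
  have hratio : ‖ratio K‖ < 1 := by
    rw [Real.norm_of_nonneg (ratio_pos K).le]
    exact ratio_lt_one K
  have hsum : Summable fun k : ℕ => (lightBound K : ℝ) * ((k + 1) * ratio K ^ k) := by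
    refine Summable.mul_left _ ?_
    simpa only [add_mul, one_mul, pow_one] using
      (summable_pow_mul_geometric_of_norm_lt_one 1 hratio).add
        (summable_geometric_of_norm_lt_one hratio)
  obtain ⟨s, hs⟩ := summable_iff_vanishing_norm.1 hsum (1 / (8 * K ^ 2)) (by positivity)
  refine ⟨s.sup id + 1, fun u hu => ?_⟩
  rw [Finset.mul_sum]
  refine (le_abs_self _).trans (hs u (Finset.disjoint_left.2 fun k hk hks => ?_)).le
  exact (hu k hk).not_gt (Nat.lt_succ_of_le (Finset.le_sup (f := id) hks))

end Levels

lemma hasSum_sum_of_fiberwise {α β : Type*} {f : α → ℝ} {a : ℝ} {g : α → β} {F : β → Finset α}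
    (hf : HasSum f a) (hF : ∀ k, ∀ σ ∈ F k, g σ = k) (hzero : ∀ σ, σ ∉ F (g σ) → f σ = 0) :
    HasSum (fun k => ∑ σ ∈ F k, f σ) a := by
  have hfiber (k : β) : ∑ σ ∈ F k, f σ = ∑' σ : g ⁻¹' {k}, f σ := by
    rw [tsum_subtype (g ⁻¹' {k}) f, tsum_eq_sum (s := F k)]
    · refine Finset.sum_congr rfl fun σ hσ => ?_
      exact (Set.indicator_of_mem (s := g ⁻¹' {k}) (hF k σ hσ) f).symm
    · refine fun σ hσ => Set.indicator_apply_eq_zero.2 ?_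
      rintro rfl
      exact hzero σ hσ
  simpa only [hfiber] using hf.tsum_fiberwise g

lemma sum_inv_ratio_pow_le (K k : ℕ) :
    ∑ i ∈ Finset.range k, (ratio K ^ (i + 1))⁻¹ ≤ (2 * K + 2) * (ratio K ^ k)⁻¹ := by
  induction k with
  | zero =>
    rw [Finset.sum_range_zero]
    positivity
  | succ k ih =>
    have hstep : (2 * K + 2) * (ratio K ^ k)⁻¹ = (2 * K + 1) * (ratio K ^ (k + 1))⁻¹ := by
      have := (ratio_pos K).ne'
      rw [← mul_ratio, pow_succ]
      field_simp
    rw [Finset.sum_range_succ]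
    linarith

namespace LevelSplitting

variable {α : Type*} {K k₀ : ℕ} {p : α → ℝ}

lemma pos (S : LevelSplitting K p) (σ : α) : 0 < p σ :=
  (pow_pos (ratio_pos K) _).trans (S.ratio_pow_lt σ)

variable (S : LevelSplitting K p)

lemma le_level {σ : α} {k : ℕ} (h : p σ ≤ ratio K ^ k) : k ≤ S.level σ :=
  Nat.lt_succ_iff.1 <|
    (pow_lt_pow_iff_right_of_lt_one₀ (ratio_pos K) (ratio_lt_one K)).1
      ((S.ratio_pow_lt σ).trans_le h)

/-- The letters that do not belong to the heavy group of their level. -/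
def light : Set α := {σ | σ ∉ S.heavy (S.level σ)}

/-- The total probability of the light letters. -/
noncomputable def lightMass : ℝ := ∑' σ : S.light, p σ

/-- The total probability of the heavy group of level `k`. -/
noncomputable def mass (k : ℕ) : ℝ := ∑ σ ∈ S.heavy k, p σ

/-- The probability of the heavy group of level `k`, conditional on the letter not being light. -/
noncomputable def share (k : ℕ) : ℝ := S.mass k / (1 - S.lightMass)

lemma card_filter_level_le {u : Finset S.light} (k : ℕ) :
    (u.filter fun σ : S.light => S.level σ = k).card ≤ lightBound K := by
  rw [← Finset.card_map (Function.Embedding.subtype (· ∈ S.light))]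
  refine S.card_le_lightBound k _ fun σ hσ => ?_
  obtain ⟨τ, hτ, rfl⟩ := Finset.mem_map.1 hσ
  obtain rfl := (Finset.mem_filter.1 hτ).2
  exact ⟨rfl, τ.2⟩

lemma sum_light_le (htail : HasSmallTail K k₀) (hlevel : ∀ σ, k₀ ≤ S.level σ)
    (u : Finset S.light) : ∑ σ ∈ u, p σ ≤ 1 / (8 * K ^ 2) := by
  have himage : ∀ k ∈ u.image fun σ : S.light => S.level σ, k₀ ≤ k := by
    intro k hk
    obtain ⟨σ, -, rfl⟩ := Finset.mem_image.1 hk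
    exact hlevel σ
  refine le_trans ?_ (htail _ himage)
  have hratio := ratio_pos K
  calc ∑ σ ∈ u, p σ ≤ ∑ σ ∈ u, ratio K ^ S.level σ :=
        Finset.sum_le_sum fun σ _ => S.le_ratio_pow σ
    _ = ∑ k ∈ u.image fun σ : S.light => S.level σ,
          (u.filter fun σ : S.light => S.level σ = k).card • ratio K ^ k :=
        Finset.sum_comp (ratio K ^ ·) fun σ : S.light => S.level σ
    _ ≤ ∑ k ∈ u.image fun σ : S.light => S.level σ,
          (lightBound K : ℝ) * ((k + 1) * ratio K ^ k) := by
        refine Finset.sum_le_sum fun k _ => ?_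
        rw [nsmul_eq_mul]
        have hcard : ((u.filter fun σ : S.light => S.level σ = k).card : ℝ) ≤ lightBound K :=
          mod_cast S.card_filter_level_le k
        gcongr
        exact le_mul_of_one_le_left (by positivity) (by linarith [k.cast_nonneg (α := ℝ)])
    _ = _ := (Finset.mul_sum ..).symm

lemma ncard_le_mul_level_add_one (hp : Summable p) (σ : S.light) :
    {τ : S.light | p σ ≤ p τ}.ncard ≤ lightBound K * (S.level σ + 1) := by
  have hfin : {τ : S.light | p σ ≤ p τ}.Finite :=
    finite_le_of_summable (hp.subtype _) (S.pos σ)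
  rw [Set.ncard_eq_toFinset_card _ hfin]
  refine (Finset.card_le_mul_card_image_of_maps_to (f := fun τ : S.light => S.level τ)
    (t := Finset.range (S.level σ + 1)) (fun τ hτ => ?_) (lightBound K)
    fun k _ => S.card_filter_level_le k).trans_eq (by rw [Finset.card_range])
  have hle : p σ ≤ p τ := hfin.mem_toFinset.1 hτ
  exact Finset.mem_range_succ_iff.2 (S.le_level (hle.trans (S.le_ratio_pow τ)))

lemma eight_mul_ncard_mul_le (hK : 0 < K) (hp : Summable p) (htail : HasSmallTail K k₀)
    (hlevel : ∀ σ, k₀ ≤ S.level σ) (σ : S.light) :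
    8 * {τ : S.light | p σ ≤ p τ}.ncard * (K * p σ) ≤ 1 / K := by
  have htail_level : lightBound K * ((S.level σ + 1) * ratio K ^ S.level σ) ≤ 1 / (8 * K ^ 2) := by
    simpa only [Finset.sum_singleton] using htail {S.level σ} fun k hk => by
      rw [Finset.mem_singleton.1 hk]
      exact hlevel σ
  have hcard : ({τ : S.light | p σ ≤ p τ}.ncard : ℝ) ≤ lightBound K * (S.level σ + 1) :=
    mod_cast S.ncard_le_mul_level_add_one hp σ
  have hpos := S.pos σ
  calc 8 * {τ : S.light | p σ ≤ p τ}.ncard * (K * p σ)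
      ≤ 8 * (lightBound K * (S.level σ + 1)) * (K * ratio K ^ S.level σ) := by
        gcongr
        exact S.le_ratio_pow σ
    _ = 8 * K * (lightBound K * ((S.level σ + 1) * ratio K ^ S.level σ)) := by ring
    _ ≤ 8 * K * (1 / (8 * K ^ 2)) := by gcongr
    _ = 1 / K := by field_simp

lemma lightMass_nonneg : 0 ≤ S.lightMass := tsum_nonneg fun σ => (S.pos σ).le

lemma lightMass_le_half (hK : 0 < K) (htail : HasSmallTail K k₀)
    (hlevel : ∀ σ, k₀ ≤ S.level σ) : S.lightMass ≤ 1 / 2 := by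
  have hK' : (1 : ℝ) ≤ K := mod_cast hK
  refine Real.tsum_le_of_sum_le (fun σ => (S.pos σ).le) fun u =>
    (S.sum_light_le htail hlevel u).trans (one_div_le_one_div_of_le two_pos ?_)
  nlinarith

lemma light_le_one_div (hK : 0 < K) (htail : HasSmallTail K k₀)
    (hlevel : ∀ σ, k₀ ≤ S.level σ) (σ : S.light) : p σ ≤ 1 / K := by
  have hK' : (1 : ℝ) ≤ K := mod_cast hK
  have h := S.sum_light_le htail hlevel {σ}
  rw [Finset.sum_singleton] at h
  refine h.trans (one_div_le_one_div_of_le (by linarith) ?_)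
  nlinarith

lemma exists_light_positions (hK : 0 < K) (hp : Summable p) (htail : HasSmallTail K k₀)
    (hlevel : ∀ σ, k₀ ≤ S.level σ) :
    ∃ x : S.light → ℕ → ℕ, Pairwise (Function.onFun Disjoint fun σ => Set.range (x σ)) ∧
      (∀ σ j, K ∣ x σ j) ∧ ∀ σ, NearProgression (x σ) (p σ) (1 / K) := by
  have hK' : (1 : ℝ) ≤ K := mod_cast hK
  have hmass : ∑' σ : S.light, K * p σ ≤ 1 / 4 := by
    refine Real.tsum_le_of_sum_le (fun σ => mul_nonneg (by positivity) (S.pos σ).le) fun u => ?_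
    rw [← Finset.mul_sum]
    calc K * ∑ σ ∈ u, p σ ≤ K * (1 / (8 * K ^ 2)) := by
          gcongr
          exact S.sum_light_le htail hlevel u
      _ = 1 / (8 * K) := by field_simp
      _ ≤ 1 / 4 := one_div_le_one_div_of_le (by norm_num) (by linarith)
  obtain ⟨x, hdisj, hx⟩ := exists_disjoint_nearProgression (q := fun σ : S.light => K * p σ)
    (fun σ => mul_pos (by linarith) (S.pos σ)) ((hp.subtype _).mul_left _) hmass
    ((div_le_one (by linarith)).2 hK') fun σ => by
      simpa only [mul_le_mul_iff_right₀ (show (0 : ℝ) < K by linarith)] using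
        S.eight_mul_ncard_mul_le hK hp htail hlevel σ
  refine ⟨fun σ j => K * x σ j, fun σ τ hστ => ?_, fun _ _ => Nat.dvd_mul_right _ _,
    fun σ => (hx σ).const_mul⟩
  have himage (σ) : Set.range (fun j => K * x σ j) = (K * ·) '' Set.range (x σ) :=
    Set.range_comp (K * ·) (x σ)
  simp only [Function.onFun, himage]
  exact (Set.disjoint_image_iff (mul_right_injective₀ hK.ne')).2 (hdisj hστ)

lemma level_mem_bounds {k : ℕ} {σ : α} (hσ : σ ∈ S.heavy k) :
    ratio K ^ k * ratio K ≤ p σ ∧ p σ ≤ ratio K ^ k := by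
  rw [← pow_succ, ← S.level_of_mem_heavy hσ]
  exact ⟨(S.ratio_pow_lt σ).le, S.le_ratio_pow σ⟩

lemma lightBound_mul_le_mass {k : ℕ} (hk : (S.heavy k).Nonempty) :
    lightBound K * ratio K ^ (k + 1) ≤ S.mass k := by
  have hcard : lightBound K ≤ (S.heavy k).card := by
    rw [S.card_heavy hk, lightBound]
    gcongr
    exact S.le_quot hk
  have hratio := ratio_pos K
  calc (lightBound K : ℝ) * ratio K ^ (k + 1) ≤ (S.heavy k).card • ratio K ^ (k + 1) := by
        rw [nsmul_eq_mul]
        gcongr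
    _ ≤ S.mass k := Finset.card_nsmul_le_sum _ _ _ fun σ hσ => (S.level_mem_bounds hσ).1

lemma mass_le {k : ℕ} (hk : (S.heavy k).Nonempty) :
    S.mass k ≤ (blockSize K * S.quot k + 1 : ℕ) * ratio K ^ k := by
  rw [← S.card_heavy hk, ← nsmul_eq_mul]
  exact Finset.sum_le_card_nsmul _ _ _ fun σ hσ => (S.level_mem_bounds hσ).2

lemma mass_nonneg (k : ℕ) : 0 ≤ S.mass k := Finset.sum_nonneg fun σ _ => (S.pos σ).le

lemma mass_pos {k : ℕ} (hk : (S.heavy k).Nonempty) : 0 < S.mass k :=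
  Finset.sum_pos (fun σ _ => S.pos σ) hk

lemma hasSum_mass (hp : HasSum p 1) : HasSum S.mass (1 - S.lightMass) := by
  have hlight : HasSum (S.light.indicator p) S.lightMass :=
    hasSum_subtype_iff_indicator.1 (hp.summable.subtype _).hasSum
  have hheavy : HasSum (S.lightᶜ.indicator p) (1 - S.lightMass) := by
    rw [Set.indicator_compl]
    exact hp.sub hlight
  have h := hasSum_sum_of_fiberwise hheavy (fun _ _ => S.level_of_mem_heavy) fun σ hσ =>
    Set.indicator_of_notMem (not_not.2 hσ) p
  refine h.congr_fun fun k => Finset.sum_congr rfl fun σ hσ => ?_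
  refine (Set.indicator_of_mem (fun hlight => hlight ?_) p).symm
  rwa [S.level_of_mem_heavy hσ]

lemma hasSum_share (hp : HasSum p 1) (hmass : S.lightMass ≤ 1 / 2) : HasSum S.share 1 := by
  have h := (S.hasSum_mass hp).div_const (1 - S.lightMass)
  rwa [div_self (by linarith)] at h

lemma mass_le_share (hmass : S.lightMass ≤ 1 / 2) (k : ℕ) : S.mass k ≤ S.share k :=
  le_div_self (S.mass_nonneg k) (by linarith) (by linarith [S.lightMass_nonneg])

lemma share_nonneg (hmass : S.lightMass ≤ 1 / 2) (k : ℕ) : 0 ≤ S.share k :=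
  (S.mass_nonneg k).trans (S.mass_le_share hmass k)

lemma inv_share_le (hmass : S.lightMass ≤ 1 / 2) (k : ℕ) :
    (S.share k)⁻¹ ≤ (ratio K ^ (k + 1))⁻¹ / lightBound K := by
  have hratio := ratio_pos K
  rcases (S.heavy k).eq_empty_or_nonempty with hk | hk
  · rw [share, mass, hk, Finset.sum_empty, zero_div, inv_zero]
    positivity
  · rw [div_eq_mul_inv, ← mul_inv, mul_comm]
    exact inv_anti₀ (mul_pos (by rw [lightBound]; positivity) (by positivity))
      ((S.lightBound_mul_le_mass hk).trans (S.mass_le_share hmass k))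

lemma sum_inv_share_le (hK : 0 < K) (hmass : S.lightMass ≤ 1 / 2) {k : ℕ}
    (hk : (S.heavy k).Nonempty) : ∑ i ∈ Finset.range k, (S.share i)⁻¹ ≤
      4 * ((2 * K ^ 2 + K) * S.quot k + 1) / (K ^ 2 * S.share k) := by
  have hK' : (1 : ℝ) ≤ K := mod_cast hK
  have hratio := ratio_pos K
  have hshare : 0 < S.share k := (S.mass_pos hk).trans_le (S.mass_le_share hmass k)
  have hbound : (2 * K + 2 : ℝ) / lightBound K ≤ 2 / K ^ 2 := by
    push_cast [lightBound, blockSize]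
    rw [div_le_div_iff₀ (by positivity) (by positivity)]
    nlinarith [pow_pos (zero_lt_one.trans_le hK') 3]
  have hinv : (ratio K ^ k)⁻¹ ≤ 2 * ((2 * K ^ 2 + K) * S.quot k + 1) / S.share k := by
    rw [le_div_iff₀ hshare, inv_mul_le_iff₀ (by positivity), share, div_le_iff₀ (by linarith)]
    have h := S.mass_le hk
    push_cast [blockSize] at h
    nlinarith [S.mass_nonneg k]
  calc ∑ i ∈ Finset.range k, (S.share i)⁻¹
      ≤ ∑ i ∈ Finset.range k, (ratio K ^ (i + 1))⁻¹ / lightBound K :=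
        Finset.sum_le_sum fun i _ => S.inv_share_le hmass i
    _ = (∑ i ∈ Finset.range k, (ratio K ^ (i + 1))⁻¹) / lightBound K := (Finset.sum_div ..).symm
    _ ≤ (2 * K + 2) * (ratio K ^ k)⁻¹ / lightBound K := by
        gcongr
        exact sum_inv_ratio_pow_le K k
    _ = (2 * K + 2) / lightBound K * (ratio K ^ k)⁻¹ := by ring
    _ ≤ 2 / K ^ 2 * (2 * ((2 * K ^ 2 + K) * S.quot k + 1) / S.share k) := by gcongr
    _ = _ := by field_simp; ring

lemma exists_interleaved_groups [Nonempty α] (hK : 0 < K) (hp : HasSum p 1)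
    (hmass : S.lightMass ≤ 1 / 2) :
    ∃ u : ℕ → α, (∀ t, u t ∉ S.light) ∧ ∀ k, ∀ σ ∈ S.heavy k, ∃ W : Set ℕ,
      u ⁻¹' {σ} = thin (apportion S.share ⁻¹' {k}) W ∧ HasNatDensity W (p σ / S.mass k) ∧
      GapsGE W (2 * (K ^ 2 * S.quot k : ℕ) - 1) ∧
      FreeRunsLE W (2 * (K * (K + 1) * S.quot k + 1 : ℕ)) := by
  choose! w hw_mem hw using fun k (hk : (S.heavy k).Nonempty) =>
    exists_heavy_sequence hK (hK.trans_le (S.le_quot hk)) (S.card_heavy hk)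
      (pow_pos (ratio_pos K) k) fun _ => S.level_mem_bounds
  have hmem (t n : ℕ) : w (apportion S.share t) n ∈ S.heavy (apportion S.share t) := by
    refine hw_mem _ (Finset.nonempty_iff_ne_empty.2 fun hempty => ?_) n
    refine apportion_ne_zero (S.share_nonneg hmass) (S.hasSum_share hp hmass) t ?_
    rw [share, mass, hempty, Finset.sum_empty, zero_div]
  refine ⟨interleave (apportion S.share) w, fun t hlight => hlight ?_, fun k σ hσ => ?_⟩
  · exact (S.level_of_mem_heavy (hmem t _)).symm ▸ hmem t _
  · refine ⟨w k ⁻¹' {σ}, preimage_interleave fun t n htn => ?_, hw k ⟨σ, hσ⟩ σ hσ⟩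
    rw [← S.level_of_mem_heavy hσ, ← htn, S.level_of_mem_heavy (hmem t n)]

theorem exists_isEvenlySpaced (hK : 16 ≤ K) (hp : HasSum p 1) (htail : HasSmallTail K k₀)
    (hlevel : ∀ σ, k₀ ≤ S.level σ) {ε : ℝ} (hε : 12 / K ≤ ε) :
    ∃ s : ℕ → α, ∀ σ, IsEvenlySpaced (s ⁻¹' {σ}) (p σ) ε := by
  have hK0 : 0 < K := by omega
  have hκ : (1 : ℝ) / K ≤ 1 / 16 := one_div_le_one_div_of_le (by norm_num) (mod_cast hK)
  have hκ1 : (1 : ℝ) / K ≤ 1 := hκ.trans (by norm_num)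
  have : Nonempty α := by
    by_contra hα
    rw [not_nonempty_iff] at hα
    exact zero_ne_one (hasSum_empty.unique hp)
  have hmass := S.lightMass_le_half hK0 htail hlevel
  obtain ⟨x, hdisj, hdvd, hx⟩ := S.exists_light_positions hK0 hp.summable htail hlevel
  obtain ⟨u, hu, hheavy⟩ := S.exists_interleaved_groups hK0 hp hmass
  have hfree : HasNatDensity (⋃ σ, Set.range (x σ))ᶜ (1 - S.lightMass) :=
    (HasNatDensity.iUnion hdisj (hp.summable.subtype _)
      (fun σ => (hx σ).hasNatDensity (S.pos σ) hκ1)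
      fun σ => (hx σ).prefixCount_le (S.pos σ) hκ1).compl
  have hmul_dvd : ∀ n ∈ ⋃ σ, Set.range (x σ), K ∣ n := by
    intro n hn
    obtain ⟨σ, j, rfl⟩ := Set.mem_iUnion.1 hn
    exact hdvd σ j
  refine ⟨overlay (fun σ => Set.range (x σ)) u, fun σ => ?_⟩
  by_cases hσ : σ ∈ S.light
  · rw [preimage_overlay_of_mem hdisj hu ⟨σ, hσ⟩]
    exact (hx ⟨σ, hσ⟩).isEvenlySpaced (S.pos σ)
      (S.light_le_one_div hK0 htail hlevel ⟨σ, hσ⟩) hκ (by rwa [mul_one_div])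
  · have hσk : σ ∈ S.heavy (S.level σ) := not_not.1 hσ
    obtain ⟨W, hW, hdensity, hgaps, hruns⟩ := hheavy _ σ hσk
    have hshare := (S.mass_pos ⟨σ, hσk⟩).trans_le (S.mass_le_share hmass _)
    have hpσ : (1 - S.lightMass) * (S.share (S.level σ) * (p σ / S.mass (S.level σ))) = p σ := by
      rw [share, ← mul_assoc, mul_div_cancel₀ _ (by linarith),
        mul_div_cancel₀ _ (S.mass_pos ⟨σ, hσk⟩).ne']
    rw [preimage_overlay_of_notMem hσ, hW, ← hpσ]
    exact isEvenlySpaced_thin_thin hK (S.le_quot ⟨σ, hσk⟩) hmul_dvd hfree (by linarith)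
      (abs_prefixCount_apportion_sub_le (S.share_nonneg hmass) (S.hasSum_share hp hmass) _)
      hshare (le_hasSum (S.hasSum_share hp hmass) _ fun k _ => S.share_nonneg hmass k)
      (S.sum_inv_share_le hK0 hmass ⟨σ, hσk⟩) hdensity hgaps hruns hε

end LevelSplitting

theorem exists_hasDensity_qr_le {α : Type*} {p : α → ℝ} {K k₀ : ℕ} {ε : ℝ} (hK : 16 ≤ K)
    (htail : HasSmallTail K k₀) (hε : 12 / K ≤ ε) (hp : ∀ σ, 0 ≤ p σ) (hsum : HasSum p 1)
    (hle : ∀ σ, p σ ≤ ratio K ^ k₀) :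
    ∃ s : ℕ → α, HasDensity s p ∧ QR s ≤ ENNReal.ofReal (1 + ε) := by
  have hsum_pos : HasSum (fun σ : Function.support p => p σ) 1 := hasSum_subtype_support.2 hsum
  obtain ⟨S⟩ := nonempty_levelSplitting (K := K) (by omega)
    (fun σ : Function.support p => (hp σ).lt_of_ne' σ.2)
    (fun σ => le_hasSum hsum σ fun τ _ => hp τ) hsum_pos.summable
  obtain ⟨s, hs⟩ := S.exists_isEvenlySpaced hK hsum_pos htail (fun σ => S.le_level (hle σ)) hε
  have hε0 : 0 ≤ ε := le_trans (by positivity) hε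
  refine ⟨fun n => s n, hasDensity_and_qr_le hε0 hp (fun n => (s n).2) fun σ hσ => ?_⟩
  rw [preimage_coe_singleton s ⟨σ, hσ.ne'⟩]
  exact hs ⟨σ, hσ.ne'⟩

end QuasiRegularSeq

open QuasiRegularSeq in
theorem exists_eps_quasi_regular_general.{u} (ε : ℝ) (hε : 0 < ε) :
    ∃ δ : ℝ, 0 < δ ∧ ∀ (α : Type u) (p : α → ℝ),
      (∀ σ, 0 ≤ p σ) → HasSum p 1 → (⨆ σ, p σ) < δ →
      ∃ s : ℕ → α, HasDensity s p ∧ QR s ≤ ENNReal.ofReal (1 + ε) := by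
  obtain ⟨N, hN⟩ := exists_nat_ge (12 / ε)
  set K := max N 16
  have hK : 16 ≤ K := le_max_right _ _
  have hKε : 12 / (K : ℝ) ≤ ε :=
    (div_le_comm₀ (by positivity) hε).2 (hN.trans (mod_cast le_max_left N 16))
  obtain ⟨k₀, htail⟩ := exists_hasSmallTail (K := K) (by omega)
  refine ⟨ratio K ^ k₀, pow_pos (ratio_pos K) k₀, fun α p hp hsum hsup => ?_⟩
  have hbdd : BddAbove (Set.range p) :=
    ⟨1, Set.forall_mem_range.2 fun σ => le_hasSum hsum σ fun τ _ => hp τ⟩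
  exact exists_hasDensity_qr_le hK htail hKε hp hsum fun σ => (le_ciSup hbdd σ).trans hsup.le

/-- **Theorem.** For every `ε > 0` there is `δ > 0` such that every probability distribution on a
countable alphabet all of whose probabilities are below `δ` (i.e. `sup_σ p σ < δ`) admits a
sequence with density `p` and quasi-regularity at most `1 + ε`. -/
theorem exists_eps_quasi_regular (ε : ℝ) (hε : 0 < ε) :
    ∃ δ : ℝ, 0 < δ ∧ ∀ (α : Type) [Countable α] (p : α → ℝ),
      (∀ σ, 0 ≤ p σ) → HasSum p 1 → (⨆ σ, p σ) < δ →
      ∃ s : ℕ → α, HasDensity s p ∧ QR s ≤ ENNReal.ofReal (1 + ε) := by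
  obtain ⟨δ, hδ, h⟩ := exists_eps_quasi_regular_general ε hε
  exact ⟨δ, hδ, fun α _ => h α⟩
end

section
/- Suppose n > 2^9 and (p_1, …, p_n) is a probability distribution with p_1 ≥ p_2 ≥ … ≥ p_n > 0 and p_1/p_n ≤ 2. Then there exists a coloring {f_i}_{i∈{1,…,n}} of ℕ such that for every i: (1) f_i is well-distributed with d(f_i) = p_i, and (2) QR_1(f_i) < 1 + 64·√((log n)/n), where log denotes the natural logarithm. -/
open scoped ENNReal

/-- The `k`-quasi-regularity of a strictly increasing `f : ℕ → ℕ`: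
`QRk k f = ⨆_{q,r ≥ k, n,m} (q/r) · (f(n+r) − f(n)) / (f(m+q) − f(m))`. -/
noncomputable def QRk (k : ℕ) (f : ℕ → ℕ) : ℝ≥0∞ :=
  ⨆ (q : ℕ) (r : ℕ) (_ : k ≤ q) (_ : k ≤ r) (n : ℕ) (m : ℕ),
    ((q : ℝ≥0∞) / (r : ℝ≥0∞)) *
      (((f (n + r) - f n : ℕ) : ℝ≥0∞) / ((f (m + q) - f m : ℕ) : ℝ≥0∞))

/-- The quasi-regularity of a strictly increasing `f : ℕ → ℕ`:
the supremum of ratios of consecutive gaps. -/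
noncomputable def QRfun (f : ℕ → ℕ) : ℝ≥0∞ :=
  ⨆ (n : ℕ) (m : ℕ),
    ((f (n + 1) - f n : ℕ) : ℝ≥0∞) / ((f (m + 1) - f m : ℕ) : ℝ≥0∞)

/-- `f` is well-distributed with density `d`: `|f⁻¹({1,…,n})| / n → d`. -/
def HasDensityFun (f : ℕ → ℕ) (d : ℝ) : Prop :=
  Filter.Tendsto
    (fun n : ℕ => ({m : ℕ | 1 ≤ f m ∧ f m ≤ n}.ncard : ℝ) / (n : ℝ))
    Filter.atTop (nhds d)

/-- A coloring of `ℕ` with color set `C`: a family of strictly increasing functions `ℕ → ℕ`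
such that every natural number is hit exactly once by the whole family. -/
def IsColoring {C : Type*} (f : C → ℕ → ℕ) : Prop :=
  (∀ c, StrictMono (f c)) ∧ ∀ m : ℕ, ∃! ci : C × ℕ, f ci.1 ci.2 = m

/-!
Divide time into blocks of length `L = n ^ 2`. In each block the numbers `p j * L` are rounded to
integer weights with sum `L`, and during the block an accumulator of color `j` modulo `L` is
advanced by its weight at every time; color `j` is used whenever its accumulator wraps around, which
happens at nearly regular intervals. By time `T` the number of uses of all colors should be `T`. If
the accumulators start at independent uniform phases, then Hoeffding's inequality shows that this
number is off by `D` or more only with small probability, and the rounding is done in such a way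
that only `n + 1` vectors of weights ever occur, so that a union bound yields phases that are good
for all `T`. Numbering the uses of all colors in order of time therefore moves each of them by at
most `D + 1`, where `D = √(2 n log n)`. Finally, the rounding thresholds of the successive blocks
are equidistributed, so that the weights of color `j` average to `p j * L` and its density is
exactly `p j`.
-/

open Filter Topology

lemma sum_range_add_div {m : ℕ} (hm : 0 < m) (a : ℕ) :
    ∑ j ∈ Finset.range m, (a + j) / m = a := by
  induction a with
  | zero =>
    refine Finset.sum_eq_zero fun j hj => ?_
    rw [zero_add, Nat.div_eq_of_lt (Finset.mem_range.1 hj)]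
  | succ a ih =>
    have hfirst := Finset.sum_range_succ (fun j => (a + j) / m) m
    have hlast := Finset.sum_range_succ' (fun j => (a + j) / m) m
    have hshift : ∑ j ∈ Finset.range m, (a + 1 + j) / m
        = ∑ j ∈ Finset.range m, (a + (j + 1)) / m :=
      Finset.sum_congr rfl fun j _ => by rw [add_right_comm, add_assoc]
    rw [Nat.add_div_right a hm] at hfirst
    rw [add_zero] at hlast
    omega

/-! ### Quasi-regularity and density -/

lemma sub_mem_Icc_of_gap_mem_Icc {g : ℕ → ℝ} {a b : ℝ}
    (h : ∀ k, g (k + 1) - g k ∈ Set.Icc a b) (n r : ℕ) :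
    g (n + r) - g n ∈ Set.Icc (r * a) (r * b) := by
  induction r with
  | zero => simp
  | succ r ih =>
    obtain ⟨hlo, hhi⟩ := h (n + r)
    rw [← add_assoc]
    push_cast
    constructor <;> linarith [ih.1, ih.2]

lemma QRk_le_of_gap_mem_Icc {k : ℕ} (hk : 1 ≤ k) {f : ℕ → ℕ} {a b : ℝ} (ha : 0 < a)
    (h : ∀ i, (f (i + 1) : ℝ) - f i ∈ Set.Icc a b) :
    QRk k f ≤ ENNReal.ofReal (b / a) := by
  have hf : Monotone f := monotone_nat_of_le_succ fun i => by
    exact_mod_cast (sub_pos.1 (ha.trans_le (h i).1)).le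
  have hgap (n r : ℕ) : ((f (n + r) - f n : ℕ) : ℝ) ∈ Set.Icc (r * a) (r * b) := by
    rw [Nat.cast_sub (hf (Nat.le_add_right n r))]
    exact sub_mem_Icc_of_gap_mem_Icc (g := fun i => f i) h n r
  refine iSup_le fun q => iSup_le fun r => iSup_le fun hq => iSup_le fun hr => iSup_le fun n =>
    iSup_le fun m => ?_
  have hq₀ : (0 : ℝ) < q := by exact_mod_cast hk.trans hq
  have hr₀ : (0 : ℝ) < r := by exact_mod_cast hk.trans hr
  have hx := (hgap n r).2
  have hy := (hgap m q).1
  generalize f (n + r) - f n = x at hx ⊢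
  generalize f (m + q) - f m = y at hy ⊢
  have hy₀ : (0 : ℝ) < y := (by positivity : (0 : ℝ) < q * a).trans_le hy
  have hratio : (q : ℝ) / r * (x / y) ≤ b / a := by
    rw [div_mul_div_comm, div_le_div_iff₀ (by positivity) ha]
    calc (q : ℝ) * x * a = q * a * x := by ring
      _ ≤ y * (r * b) := by gcongr
      _ = b * (r * y) := by ring
  rw [← ENNReal.ofReal_natCast q, ← ENNReal.ofReal_natCast r, ← ENNReal.ofReal_natCast x,
    ← ENNReal.ofReal_natCast y, ← ENNReal.ofReal_div_of_pos hr₀, ← ENNReal.ofReal_div_of_pos hy₀,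
    ← ENNReal.ofReal_mul (by positivity)]
  exact ENNReal.ofReal_le_ofReal hratio

section Density

variable {e : ℕ → Prop} [DecidablePred e] {f : ℕ → ℕ} {D : ℕ}

lemma ncard_le_count_add (he : (Set.ofPred e).Infinite) (hfe : ∀ k, Nat.nth e k ≤ f k + D) (N : ℕ) :
    {m : ℕ | 1 ≤ f m ∧ f m ≤ N}.Finite ∧
      {m : ℕ | 1 ≤ f m ∧ f m ≤ N}.ncard ≤ Nat.count e N + (D + 1) := by
  have hsub : {m : ℕ | 1 ≤ f m ∧ f m ≤ N} ⊆ Finset.range (Nat.count e N + (D + 1)) := by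
    rintro m ⟨-, hm⟩
    have hlt : Nat.nth e m < N + (D + 1) := by have := hfe m; omega
    have hcount := Nat.count_strict_mono (Nat.nth_mem_of_infinite he m) hlt
    rw [Nat.count_nth_of_infinite he, Nat.count_add] at hcount
    exact Finset.mem_coe.2 (Finset.mem_range.2 (hcount.trans_le (by gcongr; exact Nat.count_le _)))
  refine ⟨(Finset.finite_toSet _).subset hsub, ?_⟩
  simpa using Set.ncard_le_ncard hsub (Finset.finite_toSet _)

lemma count_le_ncard_add (he : (Set.ofPred e).Infinite) (hf : StrictMono f)
    (hfe : ∀ k, Nat.nth e k ≤ f k + D) (hef : ∀ k, f k ≤ Nat.nth e k + D) (N : ℕ) :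
    Nat.count e N ≤ {m : ℕ | 1 ≤ f m ∧ f m ≤ N}.ncard + (D + 1) := by
  have hsub : (Finset.Ico 1 (Nat.count e N - D) : Set ℕ) ⊆ {m : ℕ | 1 ≤ f m ∧ f m ≤ N} := by
    intro m hm
    obtain ⟨hm1, hm2⟩ := Finset.mem_Ico.1 hm
    refine ⟨hm1.trans hf.le_apply, ?_⟩
    have hlt : Nat.nth e (D + m) < N := Nat.nth_lt_of_lt_count (by omega)
    have hadd := (Nat.nth_strictMono he).add_le_nat D m
    have := hef m
    omega
  have hcard := Set.ncard_le_ncard hsub (ncard_le_count_add he hfe N).1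
  rw [Set.ncard_coe_finset, Nat.card_Ico] at hcard
  omega

lemma hasDensityFun_of_dist_nth_le (he : (Set.ofPred e).Infinite) (hf : StrictMono f)
    (hfe : ∀ k, Nat.nth e k ≤ f k + D) (hef : ∀ k, f k ≤ Nat.nth e k + D) {d : ℝ}
    (hd : Tendsto (fun N : ℕ => (Nat.count e N : ℝ) / N) atTop (𝓝 d)) : HasDensityFun f d := by
  have hzero := tendsto_const_div_atTop_nhds_zero_nat ((D : ℝ) + 1)
  have hlower (N : ℕ) : (Nat.count e N : ℝ) - (D + 1) ≤ {m : ℕ | 1 ≤ f m ∧ f m ≤ N}.ncard :=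
    sub_le_iff_le_add.2 (by exact_mod_cast count_le_ncard_add he hf hfe hef N)
  have hupper (N : ℕ) : ({m : ℕ | 1 ≤ f m ∧ f m ≤ N}.ncard : ℝ) ≤ Nat.count e N + (D + 1) := by
    exact_mod_cast (ncard_le_count_add he hfe N).2
  refine tendsto_of_tendsto_of_tendsto_of_le_of_le (by simpa using hd.sub hzero)
    (by simpa using hd.add hzero) (fun N => ?_) fun N => ?_
  · rw [← sub_div]
    exact div_le_div_of_nonneg_right (hlower N) N.cast_nonneg
  · rw [← add_div]
    exact div_le_div_of_nonneg_right (hupper N) N.cast_nonneg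

end Density

/-! ### Merging sequences of events into a coloring -/

section Interleave

variable {n : ℕ} [NeZero n] (e : Fin n → ℕ → Prop)

/-- Colors take turns: the event of color `j` at time `T` is performed at the moment `T * n + j`.
This merges the event predicates of the `n` colors into a single one. -/
def Interleave (s : ℕ) : Prop :=
  e (Nat.divModEquiv n s).2 (Nat.divModEquiv n s).1

lemma interleave_mul_add (T : ℕ) (j : Fin n) : Interleave e (T * n + j) ↔ e j T := by
  rw [Interleave, ← Nat.divModEquiv_symm_apply n (T, j), Equiv.apply_symm_apply]

variable {e} in
lemma infinite_interleave (he : ∀ j, (Set.ofPred (e j)).Infinite) :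
    (Set.ofPred (Interleave e)).Infinite := by
  refine ((he 0).image (f := fun T => T * n + (0 : Fin n)) ?_).mono ?_
  · exact fun T _ T' _ h => mul_right_cancel₀ (NeZero.ne n) (add_right_cancel h)
  · rintro _ ⟨T, hT, rfl⟩
    exact (interleave_mul_add e T 0).2 hT

variable [∀ j, DecidablePred (e j)]

instance : DecidablePred (Interleave e) := fun s =>
  inferInstanceAs (Decidable (e (Nat.divModEquiv n s).2 (Nat.divModEquiv n s).1))

lemma count_interleave_mul (T : ℕ) :
    Nat.count (Interleave e) (T * n) = ∑ j, Nat.count (e j) T := by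
  induction T with
  | zero => simp
  | succ T ih =>
    rw [add_one_mul, Nat.count_add, ih, Nat.count_eq_card_filter_range, Finset.card_filter,
      ← Fin.sum_univ_eq_sum_range (fun r => if Interleave e (T * n + r) then 1 else 0),
      ← Finset.sum_add_distrib]
    exact Finset.sum_congr rfl fun j _ => by simp only [interleave_mul_add, Nat.count_succ]

/-- The coloring obtained by numbering the events of all colors in the order in which `Interleave`
performs them: `interleaveColoring e j k` is the number given to the `k`-th event of color `j`. -/
noncomputable def interleaveColoring (j : Fin n) (k : ℕ) : ℕ :=
  Nat.count (Interleave e) (Nat.nth (e j) k * n + j)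

lemma sum_count_nth_le_interleaveColoring (j : Fin n) (k : ℕ) :
    ∑ i, Nat.count (e i) (Nat.nth (e j) k) ≤ interleaveColoring e j k := by
  rw [← count_interleave_mul]
  exact Nat.count_monotone _ (Nat.le_add_right _ _)

lemma interleaveColoring_le_sum_count_nth_succ (j : Fin n) (k : ℕ) :
    interleaveColoring e j k ≤ ∑ i, Nat.count (e i) (Nat.nth (e j) k + 1) := by
  rw [← count_interleave_mul, add_one_mul]
  exact Nat.count_monotone _ (by gcongr; exact j.2.le)

variable {e}

lemma interleaveColoring_sub_nth_mem_Ioo {D : ℝ}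
    (h : ∀ T, |∑ j, (Nat.count (e j) T : ℝ) - T| < D) (j : Fin n) (k : ℕ) :
    (interleaveColoring e j k : ℝ) - Nat.nth (e j) k ∈ Set.Ioo (-D) (D + 1) := by
  have hlower : ∑ i, (Nat.count (e i) (Nat.nth (e j) k) : ℝ) ≤ interleaveColoring e j k := by
    exact_mod_cast sum_count_nth_le_interleaveColoring e j k
  have hupper : (interleaveColoring e j k : ℝ)
      ≤ ∑ i, (Nat.count (e i) (Nat.nth (e j) k + 1) : ℝ) := by
    exact_mod_cast interleaveColoring_le_sum_count_nth_succ e j k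
  have hbefore := (abs_lt.1 (h (Nat.nth (e j) k))).1
  have hafter := (abs_lt.1 (h (Nat.nth (e j) k + 1))).2
  rw [Nat.cast_succ] at hafter
  constructor <;> linarith

lemma strictMono_interleaveColoring (he : ∀ j, (Set.ofPred (e j)).Infinite) (j : Fin n) :
    StrictMono (interleaveColoring e j) := fun k k' hk => by
  refine Nat.count_strict_mono ((interleave_mul_add e _ j).2 (Nat.nth_mem_of_infinite (he j) k)) ?_
  have := Nat.nth_strictMono (he j) hk
  gcongr
  exact NeZero.pos n

lemma isColoring_interleaveColoring (he : ∀ j, (Set.ofPred (e j)).Infinite) :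
    IsColoring (interleaveColoring e) := by
  refine ⟨strictMono_interleaveColoring he, fun m => ?_⟩
  have hevent (j : Fin n) (k : ℕ) : Interleave e (Nat.nth (e j) k * n + j) :=
    (interleave_mul_add e _ j).2 (Nat.nth_mem_of_infinite (he j) k)
  obtain ⟨⟨T, j⟩, hs⟩ := (Nat.divModEquiv n).symm.surjective (Nat.nth (Interleave e) m)
  rw [Nat.divModEquiv_symm_apply] at hs
  have hse : Interleave e (T * n + j) :=
    hs ▸ Nat.nth_mem_of_infinite (infinite_interleave he) m
  have hcount : Nat.count (Interleave e) (T * n + j) = m := by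
    rw [hs, Nat.count_nth_of_infinite (infinite_interleave he)]
  refine ⟨(j, Nat.count (e j) T), ?_, ?_⟩
  · simp only [interleaveColoring]
    rw [Nat.nth_count ((interleave_mul_add e T j).1 hse), hcount]
  · rintro ⟨j', k'⟩ h
    have hmoment : (Nat.divModEquiv n).symm (Nat.nth (e j') k', j')
        = (Nat.divModEquiv n).symm (T, j) :=
      Nat.count_injective (hevent j' k') hse (h.trans hcount.symm)
    obtain ⟨rfl, rfl⟩ := Prod.mk.inj ((Nat.divModEquiv n).symm.injective hmoment)
    rw [Nat.count_nth_of_infinite (he _)]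

end Interleave

/-! ### Wrapping accumulators -/

section Wraps

/-- The number of times that an accumulator modulo `L` has wrapped around before time `T`, if it
starts at `θ` and is advanced by `w r` at time `r`. -/
def wrapCount (L θ : ℕ) (w : ℕ → ℕ) (T : ℕ) : ℕ :=
  (θ + ∑ r ∈ Finset.range T, w r) / L

/-- The event that the accumulator counted by `wrapCount` wraps around at time `T`. -/
def Wraps (L θ : ℕ) (w : ℕ → ℕ) (T : ℕ) : Prop :=
  wrapCount L θ w T < wrapCount L θ w (T + 1)

instance (L θ : ℕ) (w : ℕ → ℕ) : DecidablePred (Wraps L θ w) := fun T =>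
  inferInstanceAs (Decidable (wrapCount L θ w T < wrapCount L θ w (T + 1)))

variable {L θ : ℕ} {w : ℕ → ℕ}

lemma wrapCount_mono : Monotone (wrapCount L θ w) := fun T T' h => by
  unfold wrapCount
  gcongr

lemma count_wraps (hθ : θ < L) (hle : ∀ r, w r ≤ L) (T : ℕ) :
    Nat.count (Wraps L θ w) T = wrapCount L θ w T := by
  induction T with
  | zero => simp [wrapCount, Nat.div_eq_of_lt hθ]
  | succ T ih =>
    have hmono := wrapCount_mono (L := L) (θ := θ) (w := w) (Nat.le_add_right T 1)
    have hstep : wrapCount L θ w (T + 1) ≤ wrapCount L θ w T + 1 := by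
      unfold wrapCount
      rw [Finset.sum_range_succ, ← add_assoc, ← Nat.add_div_right _ (by omega)]
      exact Nat.div_le_div_right (by gcongr; exact hle T)
    rw [Nat.count_succ, ih]
    by_cases h : Wraps L θ w T
    · have hlt : wrapCount L θ w T < wrapCount L θ w (T + 1) := h
      rw [if_pos h]
      omega
    · have hle : wrapCount L θ w (T + 1) ≤ wrapCount L θ w T := not_lt.1 h
      rw [if_neg h]
      omega

lemma infinite_wraps (hθ : θ < L) (hle : ∀ r, w r ≤ L) (hpos : ∀ r, 1 ≤ w r) :
    (Set.ofPred (Wraps L θ w)).Infinite := fun hfin => by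
  have hbound := Nat.count_le_card hfin ((hfin.toFinset.card + 1) * L)
  have hsum : (hfin.toFinset.card + 1) * L
      ≤ ∑ r ∈ Finset.range ((hfin.toFinset.card + 1) * L), w r := by
    simpa using Finset.card_nsmul_le_sum (Finset.range ((hfin.toFinset.card + 1) * L)) w 1
      fun r _ => hpos r
  rw [count_wraps hθ hle, wrapCount] at hbound
  have := (Nat.le_div_iff_mul_le (by omega : 0 < L)).2 (hsum.trans (Nat.le_add_left _ θ))
  omega

lemma accumulator_nth_wraps_lt (hθ : θ < L) (hle : ∀ r, w r ≤ L) (hpos : ∀ r, 1 ≤ w r) (k : ℕ) :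
    θ + ∑ r ∈ Finset.range (Nat.nth (Wraps L θ w) k), w r < (k + 1) * L := by
  have hcount := Nat.count_nth_of_infinite (infinite_wraps hθ hle hpos) k
  rw [count_wraps hθ hle] at hcount
  rw [← Nat.div_lt_iff_lt_mul (by omega)]
  exact Nat.lt_succ_of_le hcount.le

lemma le_accumulator_nth_wraps_succ (hθ : θ < L) (hle : ∀ r, w r ≤ L) (hpos : ∀ r, 1 ≤ w r)
    (k : ℕ) : (k + 1) * L ≤ θ + ∑ r ∈ Finset.range (Nat.nth (Wraps L θ w) k + 1), w r := by
  have hcount := Nat.count_nth_succ_of_infinite (infinite_wraps hθ hle hpos) k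
  rw [count_wraps hθ hle] at hcount
  rw [← Nat.le_div_iff_mul_le (by omega)]
  exact hcount.ge

lemma nth_wraps_gap_mem_Icc {a b : ℕ} (hθ : θ < L) (hle : ∀ r, w r ≤ L) (ha : 1 ≤ a)
    (hw : ∀ r, w r ∈ Set.Icc a b) (k : ℕ) :
    (Nat.nth (Wraps L θ w) (k + 1) : ℝ) - Nat.nth (Wraps L θ w) k
      ∈ Set.Icc ((L : ℝ) / b - 1) (L / a + 1) := by
  have hpos (r : ℕ) : 1 ≤ w r := ha.trans (hw r).1
  have hτ := Nat.nth_strictMono (infinite_wraps hθ hle hpos) k.lt_succ_self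
  have hlt := accumulator_nth_wraps_lt hθ hle hpos
  have hge := le_accumulator_nth_wraps_succ hθ hle hpos
  obtain ⟨d, hd⟩ := Nat.exists_eq_add_of_le (Nat.succ_le_of_lt hτ)
  have hupper : a * d ≤ L := by
    have hsum := Finset.card_nsmul_le_sum (Finset.range d)
      (fun x => w (Nat.nth (Wraps L θ w) k + 1 + x)) a fun r _ => (hw _).1
    have hk := hlt (k + 1)
    rw [hd, Finset.sum_range_add] at hk
    rw [Finset.card_range, smul_eq_mul, mul_comm] at hsum
    linarith [hge k]
  have hlower : L ≤ b * (d + 2) := by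
    have hsum := Finset.sum_le_card_nsmul (Finset.range (d + 2))
      (fun x => w (Nat.nth (Wraps L θ w) k + x)) b fun r _ => (hw _).2
    have hk := hge (k + 1)
    rw [hd, show Nat.nth (Wraps L θ w) k + 1 + d + 1 = Nat.nth (Wraps L θ w) k + (d + 2) by ring,
      Finset.sum_range_add] at hk
    rw [Finset.card_range, smul_eq_mul, mul_comm] at hsum
    linarith [hlt k]
  have ha₀ : (0 : ℝ) < a := by exact_mod_cast ha
  have hb₀ : (0 : ℝ) < b := by exact_mod_cast (hpos 0).trans (hw 0).2
  have hupper' : (d : ℝ) ≤ L / a := (le_div_iff₀' ha₀).2 (by exact_mod_cast hupper)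
  have hlower' : (L : ℝ) / b ≤ d + 2 := (div_le_iff₀' hb₀).2 (by exact_mod_cast hlower)
  rw [hd]
  push_cast
  constructor <;> linarith

end Wraps

section Blocks

variable {L : ℕ} (c : ℕ → ℕ)

lemma sum_range_div_add (hL : 0 < L) (b : ℕ) {t : ℕ} (ht : t ≤ L) :
    ∑ r ∈ Finset.range (b * L + t), c (r / L) = L * ∑ i ∈ Finset.range b, c i + c b * t := by
  have hblock (b : ℕ) {t : ℕ} (ht : t ≤ L) :
      ∑ x ∈ Finset.range t, c ((b * L + x) / L) = c b * t := by
    rw [Finset.sum_congr rfl fun x hx => by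
      rw [mul_comm, Nat.mul_add_div hL, Nat.div_eq_of_lt ((Finset.mem_range.1 hx).trans_le ht),
        add_zero], Finset.sum_const, Finset.card_range, smul_eq_mul, mul_comm]
  rw [Finset.sum_range_add, hblock b ht]
  congr 1
  clear ht t
  induction b with
  | zero => simp
  | succ b ih =>
    rw [add_one_mul, Finset.sum_range_add, hblock b le_rfl, ih, Finset.sum_range_succ]
    ring

variable {θ : ℕ}

lemma wrapCount_blocks (hL : 0 < L) (b : ℕ) {t : ℕ} (ht : t ≤ L) :
    wrapCount L θ (fun r => c (r / L)) (b * L + t)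
      = ∑ i ∈ Finset.range b, c i + (c b * t + θ) / L := by
  rw [wrapCount, sum_range_div_add c hL b ht, ← Nat.mul_add_div hL]
  congr 1
  ring

variable {c}

lemma tendsto_wrapCount_blocks_div (hθ : θ < L) {x : ℝ}
    (hc : Tendsto (fun s : ℕ => (∑ b ∈ Finset.range (s ^ 2), (c b : ℝ)) / s ^ 2) atTop (𝓝 x)) :
    Tendsto (fun N : ℕ => (wrapCount L θ (fun r => c (r / L)) N : ℝ) / N) atTop (𝓝 (x / L)) := by
  have hL : 0 < L := by omega
  refine tendsto_div_of_monotone_of_exists_subseq_tendsto_div _ _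
    (fun _ _ h => Nat.cast_le.2 (wrapCount_mono h)) fun a ha => ⟨fun s => s ^ 2 * L, ?_, ?_, ?_⟩
  · filter_upwards [eventually_ge_atTop (max 1 ⌈3 / (a - 1)⌉₊)] with s hs
    have hs₁ : (1 : ℝ) ≤ s := by exact_mod_cast (le_max_left _ _).trans hs
    have hs₂ : 3 ≤ s * (a - 1) :=
      (div_le_iff₀ (sub_pos.2 ha)).1 (Nat.ceil_le.1 ((le_max_right _ _).trans hs))
    push_cast
    rw [← mul_assoc]
    gcongr
    nlinarith
  · exact (tendsto_pow_atTop two_ne_zero).atTop_mul_const' hL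
  · refine (hc.div_const (L : ℝ)).congr fun s => ?_
    have h := wrapCount_blocks c (θ := θ) hL (s ^ 2) hL.le
    rw [mul_zero, zero_add, add_zero, Nat.div_eq_of_lt hθ, add_zero] at h
    rw [h]
    push_cast
    rw [div_div]

end Blocks

/-! ### Random phases -/

section Phases

open MeasureTheory ProbabilityTheory

variable {ι : Type*} [Fintype ι] {L : ℕ} [NeZero L]

/-- The error made on rounding each `a j / L` to `⌊(a j + θ j) / L⌋` and adding up over `j`. -/
noncomputable def phaseError (a : ι → ℕ) (θ : ι → Fin L) : ℝ :=
  ∑ j, ((((a j + θ j) / L : ℕ) : ℝ) - (a j : ℝ) / L)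

lemma integral_add_div_uniformOn (a : ℕ) :
    ∫ θ : Fin L, ((((a + θ) / L : ℕ) : ℝ) - (a : ℝ) / L) ∂uniformOn (Set.univ : Set (Fin L))
      = 0 := by
  have hsum : ∑ θ : Fin L, (((a + θ) / L : ℕ) : ℝ) = a := by
    rw [Fin.sum_univ_eq_sum_range (fun j => (((a + j) / L : ℕ) : ℝ)) L]
    exact_mod_cast sum_range_add_div (NeZero.pos L) a
  have hmass (θ : Fin L) : (uniformOn (Set.univ : Set (Fin L))).real {θ} = 1 / L := by
    rw [measureReal_def, uniformOn_univ]
    simp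
  rw [integral_fintype .of_finite]
  simp only [hmass, smul_eq_mul, ← Finset.mul_sum]
  rw [Finset.sum_sub_distrib, hsum, Finset.sum_const, Finset.card_univ, Fintype.card_fin,
    nsmul_eq_mul, mul_div_cancel₀ _ (NeZero.ne (L : ℝ)), sub_self, mul_zero]

lemma hasSubgaussianMGF_add_div (a : ℕ) :
    HasSubgaussianMGF (fun θ : Fin L => (((a + θ) / L : ℕ) : ℝ) - (a : ℝ) / L) ((1 / 2) ^ 2)
      (uniformOn (Set.univ : Set (Fin L))) := by
  have hmem (θ : Fin L) : (((a + θ) / L : ℕ) : ℝ) - (a : ℝ) / L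
      ∈ Set.Icc (((a / L : ℕ) : ℝ) - (a : ℝ) / L) (((a / L : ℕ) : ℝ) + 1 - (a : ℝ) / L) := by
    have hlo : a / L ≤ (a + θ) / L := Nat.div_le_div_right (Nat.le_add_right _ _)
    have hhi : (a + θ) / L ≤ a / L + 1 := by
      rw [← Nat.add_div_right a (NeZero.pos L)]
      exact Nat.div_le_div_right (by gcongr; exact θ.2.le)
    exact ⟨by gcongr, by gcongr; exact_mod_cast hhi⟩
  have h := hasSubgaussianMGF_of_mem_Icc_of_integral_eq_zero (measurable_of_finite _).aemeasurable
    (.of_forall hmem) (integral_add_div_uniformOn a)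
  rwa [show ∀ x y : ℝ, x + 1 - y - (x - y) = 1 by intros; ring, nnnorm_one] at h

lemma hasSubgaussianMGF_phaseError (a : ι → ℕ) :
    HasSubgaussianMGF (phaseError (L := L) a) (Fintype.card ι / 4)
      (Measure.pi fun _ : ι => uniformOn (Set.univ : Set (Fin L))) := by
  have hindep := iIndepFun_pi (μ := fun _ : ι => uniformOn (Set.univ : Set (Fin L)))
    (X := fun j θ => (((a j + θ) / L : ℕ) : ℝ) - (a j : ℝ) / L)
    fun j => (measurable_of_finite _).aemeasurable
  have hterm (j : ι) : HasSubgaussianMGF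
      (fun θ : ι → Fin L => (((a j + θ j) / L : ℕ) : ℝ) - (a j : ℝ) / L) ((1 / 2) ^ 2)
      (Measure.pi fun _ : ι => uniformOn (Set.univ : Set (Fin L))) := by
    refine HasSubgaussianMGF.of_map (Y := fun θ : ι → Fin L => θ j)
      (X := fun θ : Fin L => (((a j + θ) / L : ℕ) : ℝ) - (a j : ℝ) / L)
      (measurable_pi_apply j).aemeasurable ?_
    rw [(measurePreserving_eval (fun _ : ι => uniformOn (Set.univ : Set (Fin L))) j).map_eq]
    exact hasSubgaussianMGF_add_div (a j)
  convert HasSubgaussianMGF.sum_of_iIndepFun hindep (s := Finset.univ) fun j _ => hterm j using 1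
  · rfl
  · rw [Finset.sum_const, Finset.card_univ, nsmul_eq_mul]
    norm_num [div_eq_mul_inv]

lemma measureReal_le_abs_phaseError_le (a : ι → ℕ) {D : ℝ} (hD : 0 ≤ D) :
    (Measure.pi fun _ : ι => uniformOn (Set.univ : Set (Fin L))).real {θ | D ≤ |phaseError a θ|}
      ≤ 2 * Real.exp (-2 * D ^ 2 / Fintype.card ι) := by
  have hset : {θ : ι → Fin L | D ≤ |phaseError a θ|}
      = {θ | D ≤ phaseError a θ} ∪ {θ | D ≤ (-phaseError a) θ} := by
    ext θ
    exact le_abs (a := D) (b := phaseError a θ)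
  have hexp : -D ^ 2 / (2 * ((Fintype.card ι / 4 : NNReal) : ℝ))
      = -2 * D ^ 2 / Fintype.card ι := by
    push_cast
    field_simp
    norm_num
  have hupper := (hasSubgaussianMGF_phaseError (L := L) a).measure_ge_le hD
  have hlower := (hasSubgaussianMGF_phaseError (L := L) a).neg.measure_ge_le hD
  rw [hexp] at hupper hlower
  rw [hset, two_mul]
  exact (measureReal_union_le _ _).trans (add_le_add hupper hlower)

lemma exists_forall_abs_phaseError_lt {κ : Type*} [Fintype κ] (a : κ → ι → ℕ) {D : ℝ}
    (hD : 0 ≤ D) (h : 2 * Fintype.card κ * Real.exp (-2 * D ^ 2 / Fintype.card ι) < 1) :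
    ∃ θ : ι → Fin L, ∀ k, |phaseError (a k) θ| < D := by
  by_contra! hbad
  refine h.not_ge ?_
  calc (1 : ℝ)
      = (Measure.pi fun _ : ι => uniformOn (Set.univ : Set (Fin L))).real
          (⋃ k ∈ Finset.univ, {θ | D ≤ |phaseError (a k) θ|}) := by
        rw [← probReal_univ (μ := Measure.pi fun _ : ι => uniformOn (Set.univ : Set (Fin L)))]
        congr 1
        ext θ
        simpa using hbad θ
    _ ≤ ∑ k, (Measure.pi fun _ : ι => uniformOn (Set.univ : Set (Fin L))).real
          {θ | D ≤ |phaseError (a k) θ|} := measureReal_biUnion_finset_le _ _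
    _ ≤ ∑ _k : κ, 2 * Real.exp (-2 * D ^ 2 / Fintype.card ι) :=
        Finset.sum_le_sum fun k _ => measureReal_le_abs_phaseError_le (a k) hD
    _ = 2 * Fintype.card κ * Real.exp (-2 * D ^ 2 / Fintype.card ι) := by
        rw [Finset.sum_const, Finset.card_univ, nsmul_eq_mul]
        ring

end Phases

/-! ### Systematic rounding -/

section Threshold

/-- An equidistributed sequence of rounding thresholds: while `b` runs through
`s ^ 2, …, (s + 1) ^ 2 - 1`, the thresholds are `0, 1 / (2 * s + 1), …, 2 * s / (2 * s + 1)`. -/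
noncomputable def threshold (b : ℕ) : ℝ :=
  ((b - b.sqrt ^ 2 : ℕ) : ℝ) / (2 * b.sqrt + 1 : ℕ)

lemma threshold_sq_add {s j : ℕ} (hj : j ≤ 2 * s) :
    threshold (s ^ 2 + j) = (j : ℝ) / (2 * s + 1 : ℕ) := by
  have hs : (s ^ 2 + j).sqrt = s := by
    rw [pow_two]
    exact Nat.sqrt_add_eq s (by omega)
  rw [threshold, hs, Nat.add_sub_cancel_left]

lemma threshold_mem_Ico (b : ℕ) : threshold b ∈ Set.Ico 0 1 := by
  refine ⟨by unfold threshold; positivity, ?_⟩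
  have hb : b - b.sqrt ^ 2 < 2 * b.sqrt + 1 := by
    have := b.sqrt_le_add
    rw [pow_two]
    omega
  rw [threshold, div_lt_one (by positivity)]
  exact_mod_cast hb

variable {x : ℝ}

lemma abs_sum_floor_add_threshold_sub_le_one (hx : 0 ≤ x) (s : ℕ) :
    |∑ j ∈ Finset.range (2 * s + 1), ((⌊x + threshold (s ^ 2 + j)⌋₊ : ℝ) - x)| ≤ 1 := by
  have hfloor (j : ℕ) (hj : j ∈ Finset.range (2 * s + 1)) :
      (⌊x + threshold (s ^ 2 + j)⌋₊ : ℝ)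
        = ((⌊(2 * s + 1 : ℕ) * x⌋₊ + j) / (2 * s + 1) : ℕ) := by
    rw [threshold_sq_add (Nat.lt_succ_iff.1 (Finset.mem_range.1 hj)),
      ← Nat.floor_add_natCast (by positivity), ← Nat.floor_div_natCast, add_div,
      mul_div_cancel_left₀ x (by positivity)]
  have hhermite : ∑ j ∈ Finset.range (2 * s + 1), (⌊x + threshold (s ^ 2 + j)⌋₊ : ℝ)
      = ⌊(2 * s + 1 : ℕ) * x⌋₊ := by
    rw [Finset.sum_congr rfl hfloor]
    exact_mod_cast sum_range_add_div (by omega) _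
  rw [Finset.sum_sub_distrib, hhermite, Finset.sum_const, Finset.card_range, nsmul_eq_mul]
  exact Nat.abs_floor_sub_le (by positivity)

lemma abs_sum_range_sq_floor_add_threshold_sub_le (hx : 0 ≤ x) (s : ℕ) :
    |∑ b ∈ Finset.range (s ^ 2), ((⌊x + threshold b⌋₊ : ℝ) - x)| ≤ s := by
  induction s with
  | zero => simp
  | succ s ih =>
    rw [show (s + 1) ^ 2 = s ^ 2 + (2 * s + 1) by ring, Finset.sum_range_add, Nat.cast_succ]
    exact (abs_add_le _ _).trans (add_le_add ih (abs_sum_floor_add_threshold_sub_le_one hx s))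

lemma tendsto_sum_floor_add_threshold_div (hx : 0 ≤ x) :
    Tendsto (fun s : ℕ => (∑ b ∈ Finset.range (s ^ 2), (⌊x + threshold b⌋₊ : ℝ)) / s ^ 2)
      atTop (𝓝 x) := by
  rw [tendsto_iff_dist_tendsto_zero]
  refine squeeze_zero' (.of_forall fun _ => dist_nonneg) ?_ tendsto_one_div_atTop_nhds_zero_nat
  filter_upwards [eventually_gt_atTop 0] with s hs
  have hs₀ : (0 : ℝ) < s := by exact_mod_cast hs
  have h := abs_sum_range_sq_floor_add_threshold_sub_le hx s
  rw [Finset.sum_sub_distrib, Finset.sum_const, Finset.card_range, nsmul_eq_mul,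
    Nat.cast_pow] at h
  rw [Real.dist_eq, div_sub' (by positivity), abs_div, abs_of_pos (by positivity : (0 : ℝ) < s ^ 2),
    div_le_div_iff₀ (by positivity) hs₀, one_mul]
  exact (mul_le_mul_of_nonneg_right h hs₀.le).trans_eq (pow_two _).symm

end Threshold

section SystematicRound

variable {n : ℕ} (P : Fin n → ℝ)

/-- Systematic rounding of `P` with threshold `u`: the partial sums of `P` are all shifted by `u`
and rounded down, and the increments of the resulting integers are returned. -/
noncomputable def systematicRound (u : ℝ) (j : Fin n) : ℕ :=
  ⌊Fin.partialSum P j.succ + u⌋₊ - ⌊Fin.partialSum P j.castSucc + u⌋₊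

lemma partialSum_last : Fin.partialSum P (Fin.last n) = ∑ j, P j := by
  rw [Fin.partialSum, Fin.val_last, List.take_of_length_le (List.length_ofFn).le, List.sum_ofFn]

lemma exists_systematicRound_eq_fract {u : ℝ} (hu : u ∈ Set.Ico 0 1) :
    ∃ i, systematicRound P u = systematicRound P (Int.fract (-Fin.partialSum P i)) := by
  obtain ⟨i, hi⟩ := Finite.exists_min fun i => Int.fract (Fin.partialSum P i + u)
  have hle : Int.fract (Fin.partialSum P i + u) ≤ u := by
    simpa [Int.fract_eq_self.2 hu] using hi 0
  have hfract : Int.fract (-Fin.partialSum P i) = u - Int.fract (Fin.partialSum P i + u) := by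
    refine Int.fract_eq_iff.2 ⟨sub_nonneg.2 hle,
      (sub_le_self u (Int.fract_nonneg _)).trans_lt hu.2, -⌊Fin.partialSum P i + u⌋, ?_⟩
    rw [Int.fract]
    push_cast
    ring
  -- Lowering the threshold by the least fractional part moves no partial sum across an integer.
  have hfloor (j : Fin (n + 1)) : ⌊Fin.partialSum P j + u⌋₊
      = ⌊Fin.partialSum P j + Int.fract (-Fin.partialSum P i)⌋₊ := by
    rw [hfract, ← Int.floor_toNat, ← Int.floor_toNat]
    congr 1
    refine (Int.floor_eq_iff.2 ?_).symm
    have hsplit := Int.floor_add_fract (Fin.partialSum P j + u)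
    constructor <;> linarith [hi j, Int.fract_nonneg (Fin.partialSum P i + u),
      Int.fract_lt_one (Fin.partialSum P j + u)]
  refine ⟨i, funext fun j => ?_⟩
  rw [systematicRound, systematicRound, hfloor, hfloor]

variable {P} (hP : ∀ j, 0 ≤ P j)
include hP

lemma partialSum_nonneg (i : Fin (n + 1)) : 0 ≤ Fin.partialSum P i := by
  induction i using Fin.induction with
  | zero => rw [Fin.partialSum_zero]
  | succ j ih =>
    rw [Fin.partialSum_succ]
    exact add_nonneg ih (hP j)

lemma floor_partialSum_add_mono (u : ℝ) (j : Fin n) :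
    ⌊Fin.partialSum P j.castSucc + u⌋₊ ≤ ⌊Fin.partialSum P j.succ + u⌋₊ := by
  rw [Fin.partialSum_succ]
  exact Nat.floor_mono (by linarith [hP j])

lemma sum_systematicRound {u : ℝ} (hu : u ∈ Set.Ico 0 1) {L : ℕ} (hL : ∑ j, P j = L) :
    ∑ j, systematicRound P u j = L := by
  have hlast : ⌊Fin.partialSum P (Fin.last n) + u⌋₊ = L := by
    rw [partialSum_last, hL, add_comm, Nat.floor_add_natCast hu.1, Nat.floor_eq_zero.2 hu.2,
      zero_add]
  have hfirst : ⌊Fin.partialSum P 0 + u⌋₊ = 0 := by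
    rw [Fin.partialSum_zero, zero_add, Nat.floor_eq_zero.2 hu.2]
  have htelescope := (Fin.sum_univ_succ fun i => ⌊Fin.partialSum P i + u⌋₊).symm.trans
    (Fin.sum_univ_castSucc fun i => ⌊Fin.partialSum P i + u⌋₊)
  rw [hlast, hfirst, zero_add] at htelescope
  have hadd : ∑ j, systematicRound P u j + ∑ j, ⌊Fin.partialSum P (Fin.castSucc j) + u⌋₊
      = ∑ j, ⌊Fin.partialSum P (Fin.succ j) + u⌋₊ := by
    rw [← Finset.sum_add_distrib]
    exact Finset.sum_congr rfl fun j _ => Nat.sub_add_cancel (floor_partialSum_add_mono hP u j)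
  omega

lemma systematicRound_mem_Icc {u : ℝ} (hu : 0 ≤ u) (j : Fin n) :
    systematicRound P u j ∈ Set.Icc ⌊P j⌋₊ (⌊P j⌋₊ + 1) := by
  have hS : 0 ≤ Fin.partialSum P j.castSucc + u := add_nonneg (partialSum_nonneg hP _) hu
  have hlower := Int.le_floor_add (P j) (Fin.partialSum P j.castSucc + u)
  have hupper := Int.le_floor_add_floor (P j) (Fin.partialSum P j.castSucc + u)
  rw [← add_assoc, add_comm (P j) (Fin.partialSum P _), ← Fin.partialSum_succ,
    ← Int.natCast_floor_eq_floor (hP j), ← Int.natCast_floor_eq_floor hS,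
    ← Int.natCast_floor_eq_floor (add_nonneg (partialSum_nonneg hP _) hu)] at hlower hupper
  rw [systematicRound]
  constructor <;> omega

lemma tendsto_sum_systematicRound_threshold_div (j : Fin n) :
    Tendsto (fun s : ℕ => (∑ b ∈ Finset.range (s ^ 2),
      (systematicRound P (threshold b) j : ℝ)) / s ^ 2) atTop (𝓝 (P j)) := by
  have h := (tendsto_sum_floor_add_threshold_div (partialSum_nonneg hP j.succ)).sub
    (tendsto_sum_floor_add_threshold_div (partialSum_nonneg hP j.castSucc))
  rw [Fin.partialSum_succ, add_sub_cancel_left, ← Fin.partialSum_succ] at h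
  refine h.congr fun s => ?_
  rw [← sub_div, ← Finset.sum_sub_distrib]
  congr 1
  exact Finset.sum_congr rfl fun b _ => (Nat.cast_sub (floor_partialSum_add_mono hP _ j)).symm

end SystematicRound

/-! ### The coloring of a rounded distribution -/

section Discrepancy

variable {L : ℕ} [NeZero L]

lemma sum_wrapCount_blocks_sub {ι : Type*} [Fintype ι] {c : ℕ → ι → ℕ} (hc : ∀ b, ∑ j, c b j = L)
    (θ : ι → Fin L) (b : ℕ) {t : ℕ} (ht : t ≤ L) :
    ∑ j, (wrapCount L (θ j) (fun r => c (r / L) j) (b * L + t) : ℝ) - (b * L + t : ℕ)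
      = phaseError (fun j => c b j * t) θ := by
  have hblocks : ∑ j, ∑ i ∈ Finset.range b, (c i j : ℝ) = b * L := by
    rw [Finset.sum_comm]
    simp only [← Nat.cast_sum, hc, Finset.sum_const, Finset.card_range, smul_eq_mul, Nat.cast_mul]
  have hpartial : ∑ j, ((c b j * t : ℕ) : ℝ) / L = t := by
    rw [← Finset.sum_div, ← Nat.cast_sum, ← Finset.sum_mul, hc, Nat.cast_mul,
      mul_div_cancel_left₀ _ (NeZero.ne (L : ℝ))]
  have hcount (j : ι) := wrapCount_blocks (fun i => c i j) (θ := θ j) (NeZero.pos L) b ht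
  simp only [hcount, phaseError, Nat.cast_add, Nat.cast_sum, Finset.sum_add_distrib,
    Finset.sum_sub_distrib, hblocks, hpartial]
  push_cast
  ring

variable {n : ℕ} {P : Fin n → ℝ} (hP : ∀ j, 0 ≤ P j) (hL : ∑ j, P j = L)
include hP hL

-- The position inside a block and the `n + 1` possible rounding vectors leave only `(n + 1) * L`
-- phase errors to control.
lemma exists_phases_forall_abs_sum_wrapCount_sub_lt {D : ℝ} (hD : 0 ≤ D)
    (h : 2 * ((n + 1) * L) * Real.exp (-2 * D ^ 2 / n) < 1) :
    ∃ θ : Fin n → Fin L, ∀ u : ℕ → ℝ, (∀ b, u b ∈ Set.Ico 0 1) → ∀ T : ℕ,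
      |∑ j, (wrapCount L (θ j) (fun r => systematicRound P (u (r / L)) j) T : ℝ) - T| < D := by
  obtain ⟨θ, hθ⟩ := exists_forall_abs_phaseError_lt (L := L) (κ := Fin (n + 1) × Fin L)
    (fun k j => systematicRound P (Int.fract (-Fin.partialSum P k.1)) j * k.2) hD
    (by simpa using h)
  refine ⟨θ, fun u hu T => ?_⟩
  have ht : T % L < L := Nat.mod_lt T (NeZero.pos L)
  obtain ⟨i, hi⟩ := exists_systematicRound_eq_fract P (hu (T / L))
  have hsub := sum_wrapCount_blocks_sub (fun b => sum_systematicRound hP (hu b) hL) θ (T / L) ht.le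
  rw [Nat.div_add_mod', hi] at hsub
  rw [hsub]
  exact hθ (i, ⟨T % L, ht⟩)

end Discrepancy

lemma hasDensityFun_interleaveColoring {n : ℕ} [NeZero n] {e : Fin n → ℕ → Prop}
    [∀ j, DecidablePred (e j)] (he : ∀ j, (Set.ofPred (e j)).Infinite) {D : ℝ}
    (h : ∀ T, |∑ j, (Nat.count (e j) T : ℝ) - T| < D) (j : Fin n) {d : ℝ}
    (hd : Tendsto (fun N : ℕ => (Nat.count (e j) N : ℝ) / N) atTop (𝓝 d)) :
    HasDensityFun (interleaveColoring e j) d := by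
  have hceil := Nat.le_ceil D
  refine hasDensityFun_of_dist_nth_le (D := ⌈D⌉₊ + 1) (he j) (strictMono_interleaveColoring he j)
    (fun k => ?_) (fun k => ?_) hd <;>
  · rw [← Nat.cast_le (α := ℝ)]
    push_cast
    linarith [(interleaveColoring_sub_nth_mem_Ioo h j k).1,
      (interleaveColoring_sub_nth_mem_Ioo h j k).2]

theorem exists_isColoring_gap_mem_Icc {n L : ℕ} [NeZero L] {P : Fin n → ℝ} (hP : ∀ j, 1 ≤ P j)
    (hL : ∑ j, P j = L) {D : ℝ} (hD : 0 ≤ D)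
    (h : 2 * ((n + 1) * L) * Real.exp (-2 * D ^ 2 / n) < 1) :
    ∃ f : Fin n → ℕ → ℕ, IsColoring f ∧ ∀ j, HasDensityFun (f j) (P j / L) ∧
      ∀ k, (f j (k + 1) : ℝ) - f j k
        ∈ Set.Icc (L / (⌊P j⌋₊ + 1) - (2 + 2 * D)) (L / ⌊P j⌋₊ + (2 + 2 * D)) := by
  have hP₀ (j : Fin n) : 0 ≤ P j := zero_le_one.trans (hP j)
  have : NeZero n := ⟨by rintro rfl; exact NeZero.ne (L : ℝ) (by simpa using hL.symm)⟩
  obtain ⟨θ, hθ⟩ := exists_phases_forall_abs_sum_wrapCount_sub_lt hP₀ hL hD h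
  let w (j : Fin n) (r : ℕ) : ℕ := systematicRound P (threshold (r / L)) j
  have hw (j : Fin n) (r : ℕ) : w j r ∈ Set.Icc ⌊P j⌋₊ (⌊P j⌋₊ + 1) :=
    systematicRound_mem_Icc hP₀ (threshold_mem_Ico _).1 j
  have hfloor (j : Fin n) : 1 ≤ ⌊P j⌋₊ := (Nat.one_le_floor_iff _).2 (hP j)
  have hle (j : Fin n) (r : ℕ) : w j r ≤ L :=
    (Finset.single_le_sum (fun _ _ => Nat.zero_le _) (Finset.mem_univ j)).trans_eq
      (sum_systematicRound hP₀ (threshold_mem_Ico (r / L)) hL)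
  have hinf (j : Fin n) := infinite_wraps (θ j).2 (hle j) fun r => (hfloor j).trans (hw j r).1
  have hcount (j : Fin n) (T : ℕ) := count_wraps (θ j).2 (hle j) T
  have hdisc (T : ℕ) : |∑ j, (Nat.count (Wraps L (θ j) (w j)) T : ℝ) - T| < D := by
    simp only [hcount]
    exact hθ threshold threshold_mem_Ico T
  refine ⟨interleaveColoring fun j => Wraps L (θ j) (w j), isColoring_interleaveColoring hinf,
    fun j => ⟨hasDensityFun_interleaveColoring hinf hdisc j ?_, fun k => ?_⟩⟩
  · simp only [hcount]
    exact tendsto_wrapCount_blocks_div (c := fun b => systematicRound P (threshold b) j) (θ j).2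
      (tendsto_sum_systematicRound_threshold_div hP₀ j)
  · have hgap := nth_wraps_gap_mem_Icc (θ j).2 (hle j) (hfloor j) (hw j) k
    have hk := interleaveColoring_sub_nth_mem_Ioo hdisc j k
    have hk' := interleaveColoring_sub_nth_mem_Ioo hdisc j (k + 1)
    rw [Nat.cast_succ] at hgap
    constructor <;> linarith [hgap.1, hgap.2, hk.1, hk.2, hk'.1, hk'.2]

/-! ### Numerical estimates -/

section Numerics

variable {x : ℝ}

lemma log_512_mem_Icc : Real.log 512 ∈ Set.Icc 6 8 := by
  rw [show (512 : ℝ) = 2 ^ 9 by norm_num, Real.log_pow, Nat.cast_ofNat]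
  constructor <;> linarith [Real.log_two_gt_d9, Real.log_two_lt_d9]

lemma sqrt_log_div_self_le (hx : 512 ≤ x) : √(Real.log x / x) ≤ 1 / 8 := by
  have hexp : Real.exp 1 ≤ 512 := by linarith [Real.exp_one_lt_d9]
  have hanti : Real.log x / x ≤ Real.log 512 / 512 :=
    Real.log_div_self_antitoneOn hexp (hexp.trans hx) hx
  exact Real.sqrt_le_iff.2 ⟨by norm_num, by linarith [log_512_mem_Icc.2]⟩

lemma self_mul_sqrt_log_div_self (hx : 0 < x) : x * √(Real.log x / x) = √(x * Real.log x) := by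
  rw [← Real.sqrt_sq hx.le, ← Real.sqrt_mul (sq_nonneg x), Real.sqrt_sq hx.le]
  congr 1
  field_simp

lemma fifty_le_self_mul_sqrt_log_div_self (hx : 512 ≤ x) : 50 ≤ x * √(Real.log x / x) := by
  have hlog : 6 ≤ Real.log x := log_512_mem_Icc.1.trans (Real.log_le_log (by norm_num) hx)
  rw [self_mul_sqrt_log_div_self (by linarith)]
  exact Real.le_sqrt_of_sq_le (by nlinarith)

lemma two_add_two_mul_sqrt_le (hx : 512 ≤ x) :
    2 + 2 * √(2 * x * Real.log x) ≤ 29 / 10 * (x * √(Real.log x / x)) := by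
  have hsqrt : √(2 * x * Real.log x) = √2 * (x * √(Real.log x / x)) := by
    rw [self_mul_sqrt_log_div_self (by linarith), mul_assoc, Real.sqrt_mul zero_le_two]
  have htwo : √2 ≤ 1.42 := Real.sqrt_le_iff.2 (by norm_num)
  rw [hsqrt]
  nlinarith [fifty_le_self_mul_sqrt_log_div_self hx]

lemma add_div_sub_lt {s E r R : ℝ} (hs : 0 < s) (hs' : s ≤ 1 / 8) (hR : 0 < R)
    (hE : E ≤ 6 * (s * R)) (hr : r ≤ R + s * R) :
    0 < R - E ∧ (r + E) / (R - E) < 1 + 64 * s := by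
  have hsR : 0 < s * R := mul_pos hs hR
  have hpos : 0 < R - E := by nlinarith
  refine ⟨hpos, (div_lt_iff₀ hpos).2 ?_⟩
  nlinarith

lemma gap_ratio_lt (hx : 512 ≤ x) {κ : ℝ} (hlo : x / 4 ≤ κ) (hhi : κ ≤ 2 * x) :
    0 < x ^ 2 / (κ + 1) - (2 + 2 * √(2 * x * Real.log x)) ∧
      (x ^ 2 / κ + (2 + 2 * √(2 * x * Real.log x)))
        / (x ^ 2 / (κ + 1) - (2 + 2 * √(2 * x * Real.log x))) < 1 + 64 * √(Real.log x / x) := by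
  have hκ : 0 < κ := by linarith
  have hxs := fifty_le_self_mul_sqrt_log_div_self hx
  have hs : 0 < √(Real.log x / x) := pos_of_mul_pos_right (by linarith) (by linarith : 0 ≤ x)
  have hR : 49 / 100 * x ≤ x ^ 2 / (κ + 1) := (le_div_iff₀ (by linarith)).2 (by nlinarith)
  have hR₀ : 0 < x ^ 2 / (κ + 1) := by positivity
  refine add_div_sub_lt hs (sqrt_log_div_self_le hx) hR₀ ?_ ?_
  · linarith [two_add_two_mul_sqrt_le hx, mul_le_mul_of_nonneg_left hR hs.le]
  · have hsplit : x ^ 2 / κ = x ^ 2 / (κ + 1) + 1 / κ * (x ^ 2 / (κ + 1)) := by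
      field_simp
    have hκs : 1 / κ ≤ √(Real.log x / x) := (div_le_iff₀ hκ).2 (by nlinarith)
    rw [hsplit]
    gcongr

lemma two_mul_mul_exp_lt_one {n : ℕ} (hn : 3 ≤ n) :
    2 * (((n : ℝ) + 1) * (n ^ 2 : ℕ)) * Real.exp (-2 * √(2 * n * Real.log n) ^ 2 / n) < 1 := by
  have hn₀ : (3 : ℝ) ≤ n := by exact_mod_cast hn
  have hexponent : -2 * √(2 * n * Real.log n) ^ 2 / n = -Real.log ((n : ℝ) ^ 4) := by
    rw [Real.sq_sqrt (by positivity), Real.log_pow]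
    push_cast
    field_simp
    ring
  rw [hexponent, Real.exp_neg, Real.exp_log (by positivity), ← div_eq_mul_inv,
    div_lt_one (by positivity)]
  have hquad : 0 < (n : ℝ) ^ 2 * (n ^ 2 - 2 * (n + 1)) := by
    refine mul_pos (by positivity) ?_
    nlinarith
  push_cast
  linarith

end Numerics

theorem exists_coloring_of_flat_distribution_general (n : ℕ) (hn : 2 ^ 9 < n) (p : Fin n → ℝ)
    (hsum : ∑ i, p i = 1) (hflat : ∀ i, n * p i ∈ Set.Icc (1 / 2) 2) :
    ∃ f : Fin n → ℕ → ℕ, IsColoring f ∧ ∀ i : Fin n,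
      HasDensityFun (f i) (p i) ∧
      QRk 1 (f i) < ENNReal.ofReal (1 + 64 * Real.sqrt (Real.log n / n)) := by
  have hn₀ : (512 : ℝ) ≤ n := by exact_mod_cast hn.le
  have : NeZero (n ^ 2) := ⟨by positivity⟩
  have hscale (i : Fin n) : p i * (n ^ 2 : ℕ) = n * p i * n := by push_cast; ring
  have hP (i : Fin n) : n / 2 ≤ p i * (n ^ 2 : ℕ) := by rw [hscale]; nlinarith [(hflat i).1]
  obtain ⟨f, hf, hfi⟩ := exists_isColoring_gap_mem_Icc (L := n ^ 2)
    (P := fun i => p i * (n ^ 2 : ℕ)) (fun i => by linarith [hP i])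
    (by rw [← Finset.sum_mul, hsum, one_mul]) (Real.sqrt_nonneg _)
    (two_mul_mul_exp_lt_one (by omega))
  refine ⟨f, hf, fun i => ⟨?_, ?_⟩⟩
  · rw [← mul_div_cancel_right₀ (p i) (NeZero.ne ((n ^ 2 : ℕ) : ℝ))]
    exact (hfi i).1
  · have hfloor := Nat.floor_le (show 0 ≤ p i * (n ^ 2 : ℕ) by linarith [hP i])
    obtain ⟨hpos, hratio⟩ := gap_ratio_lt hn₀ (κ := ⌊p i * (n ^ 2 : ℕ)⌋₊)
      (by linarith [hP i, Nat.lt_floor_add_one (p i * (n ^ 2 : ℕ))])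
      (hfloor.trans (by rw [hscale]; gcongr; exact (hflat i).2))
    rw [← Nat.cast_pow] at hpos hratio
    exact (QRk_le_of_gap_mem_Icc le_rfl hpos (hfi i).2).trans_lt
      ((ENNReal.ofReal_lt_ofReal_iff (by positivity)).2 hratio)

lemma card_mul_mem_Icc_of_forall_le_mul {ι : Type*} [Fintype ι] {p : ι → ℝ} (hsum : ∑ i, p i = 1)
    {a : ℝ} (ha : 0 < a) (h : ∀ i j, p i ≤ a * p j) (i : ι) :
    Fintype.card ι * p i ∈ Set.Icc (1 / a) a := by
  constructor
  · rw [div_le_iff₀ ha, mul_assoc, mul_comm (p i), ← hsum, ← nsmul_eq_mul]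
    exact Finset.sum_le_card_nsmul _ _ _ fun j _ => h j i
  · rw [← nsmul_eq_mul, ← mul_one a, ← hsum, Finset.mul_sum]
    exact Finset.card_nsmul_le_sum _ _ _ fun j _ => h i j

/-- **Proposition.** Suppose `n > 2⁹` and `(p 0, …, p (n−1))` is a probability distribution with
`p 0 ≥ p 1 ≥ … ≥ p (n−1) > 0` and `p 0 / p (n−1) ≤ 2`. Then there is a coloring
`{f i}_{i ∈ Fin n}` of `ℕ` with `d(f i) = p i` and `QR₁(f i) < 1 + 64 √(log n / n)`. -/
theorem exists_coloring_of_flat_distribution (n : ℕ) (hn : 2 ^ 9 < n)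
    (p : Fin n → ℝ)
    (hmono : ∀ i j : Fin n, i ≤ j → p j ≤ p i)
    (hpos : ∀ i, 0 < p i)
    (hsum : ∑ i, p i = 1)
    (hratio : p ⟨0, by omega⟩ / p ⟨n - 1, by omega⟩ ≤ 2) :
    ∃ f : Fin n → ℕ → ℕ, IsColoring f ∧ ∀ i : Fin n,
      HasDensityFun (f i) (p i) ∧
      QRk 1 (f i) < ENNReal.ofReal (1 + 64 * Real.sqrt (Real.log n / n)) := by
  have hpair (i j : Fin n) : p i ≤ 2 * p j :=
    calc p i ≤ p ⟨0, by omega⟩ := hmono _ _ (Nat.zero_le _)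
      _ ≤ 2 * p ⟨n - 1, by omega⟩ := (div_le_iff₀ (hpos _)).1 hratio
      _ ≤ 2 * p j := by gcongr; exact hmono _ _ (Nat.le_sub_one_of_lt j.2)
  exact exists_coloring_of_flat_distribution_general n hn p hsum
    (by simpa using card_mul_mem_Icc_of_forall_le_mul hsum two_pos hpair)
end
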